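/- (A priori bound on linear statistics) Let β>0 and V satisfy conditions C1–C3 with equilibrium density ρ, fix ε>0 small, and let I = [−2−ε, 2+ε]. Let p_1^{(n)} be the first marginal density of the β-ensemble with potential V restricted to I. Then there exists C>0 such that for every continuously differentiable function f : I → ℝ and every n ≥ 2: | ∫_I f(λ) ( p_1^{(n)}(λ) − ρ(λ) ) dλ | ≤ C · ‖f‖₂^{1/2} · ‖f'‖₂^{1/2} · n^{-1/2} · (log n)^{1/2}, where ‖·‖₂ denotes the L²(I) norm. -/

import Mathlib

/-!
The linear statistic of a configuration `Λ` of `n` points is `∫ f d(emp Λ)`, where `emp Λ` is the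
empirical measure, and the claim compares its mean under the ensemble with `∫ f ρ`. The proof shows
that a deviation of the linear statistic forces a large logarithmic energy of `emp Λ - ρ`, and that
the ensemble makes a large energy improbable.

*Energy and windows.* The kernel `-log |u|`, truncated at distance `η = 1 / n`, is up to a constant
a positive superposition of tents `(t - |u|)₊`, with density `1 / t ^ 2` in the width `t` and a mass
at the largest width (`integral_tent_div`), and
pairing `μ - ν` with itself against a tent of width `t` gives the squared `L²` norm `om μ ν t` of
`z ↦ (μ - ν) (z, z + t]`. Hence the truncated energy dominates `∫ om μ ν t / t ^ 2`
(`integral_om_le`). As a window of length `s + u` splits into windows of length `s` and `u`, this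
integral bound becomes the pointwise bound `om μ ν s ≤ C s (energy + η)` (`om_le_linear`).

*Duality.* The function `f` is compared with its average over shifts by less than `t`. Both the
average and the difference between `f` and a shift of `f` are integrals of a function over windows,
so they pair with `μ - ν` through window discrepancies; taking `t` comparable to `‖f‖₂ / ‖f'‖₂`
gives `(∫ f dμ - ∫ f dν) ^ 2 ≤ C ‖f‖₂ ‖f'‖₂ (energy + η)` (`duality`). Since `f` need not vanish at
the ends of the interval, the average is controlled near the boundary by Agmon's inequality.

*The ensemble.* The Euler-Lagrange inequality for `ρ` bounds the weight of a configuration by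
`exp (-(β / 2) n ^ 2 (energy + const) + O(n log n))` (`betaWeight_le_exp_logEnergy`), while Jensen's
inequality under the product of copies of `ρ` bounds the partition function from below by
`exp (-(β / 2) n ^ 2 const - O(n))` with the same constant (`le_resZ`). Hence the squared deviation
of the linear statistic, multiplied by `n ^ 2 / (‖f‖₂ ‖f'‖₂)`, has an exponential moment of size
`exp (O(n log n))` at a small fixed rate, so its mean is `O(n log n)` (`sq_mean_le`). Symmetry of the weight identifies the
mean of the linear statistic with the integral against the first marginal (`integral_mul_resP1`,
`setIntegral_swap`).
-/

open MeasureTheory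

/-- Unnormalized joint eigenvalue density of the β-ensemble with potential `V`. -/
noncomputable def betaWeight (β : ℝ) (V : ℝ → ℝ) (n : ℕ) (Λ : Fin n → ℝ) : ℝ :=
  (∏ i, Real.exp (-((n : ℝ) * β * V (Λ i)) / 2)) *
    ∏ i, ∏ j ∈ Finset.Ioi i, |Λ i - Λ j| ^ β

/-- Conditions C1–C3. -/
structure EquilC13 (V : ℝ → ℝ) (D : Set ℂ) (ρ : ℝ → ℝ) (P : ℂ → ℂ) : Prop where
  D_open : IsOpen D
  D_supset : ∀ x : ℝ, x ∈ Set.Icc (-2:ℝ) 2 → (x : ℂ) ∈ D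
  ρ_nonneg : ∀ x, 0 ≤ ρ x
  ρ_int : ∫ x, ρ x = 1
  ρ_supp : ∀ x, x ∉ Set.Icc (-2:ℝ) 2 → ρ x = 0
  P_anal : DifferentiableOn ℂ P D
  P_pos : ∃ c > 0, ∀ x : ℝ, x ∈ Set.Icc (-2:ℝ) 2 → (P x).im = 0 ∧ c ≤ (P x).re
  ρ_eq : ∀ x ∈ Set.Icc (-2:ℝ) 2,
    ρ x = (1 / (2 * Real.pi)) * (P x).re * Real.sqrt (4 - x ^ 2)
  V_anal : ∃ Vc : ℂ → ℂ, DifferentiableOn ℂ Vc D ∧ ∀ x : ℝ, (x : ℂ) ∈ D → Vc x = V x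
  equil : ∃ c : ℝ, (∀ x ∈ Set.Icc (-2:ℝ) 2,
      2 * (∫ μ, Real.log |x - μ| * ρ μ) - V x = c) ∧
    ∀ x, x ∉ Set.Icc (-2:ℝ) 2 → 2 * (∫ μ, Real.log |x - μ| * ρ μ) - V x < c

/-- Partition function of the β-ensemble restricted to the interval `[a,b]`. -/
noncomputable def resZ (β : ℝ) (V : ℝ → ℝ) (a b : ℝ) (n : ℕ) : ℝ :=
  ∫ Λ in Set.univ.pi (fun _ : Fin n => Set.Icc a b), betaWeight β V n Λ

/-- First marginal density of the β-ensemble (`n = k+2` eigenvalues) restricted to `[a,b]`. -/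
noncomputable def resP1 (β : ℝ) (V : ℝ → ℝ) (a b : ℝ) (k : ℕ) (l : ℝ) : ℝ :=
  (resZ β V a b (k + 2))⁻¹ *
    ∫ y in Set.univ.pi (fun _ : Fin (k + 1) => Set.Icc a b),
      betaWeight β V (k + 2) (Fin.cons l y)

namespace BetaEns
open Set

/-! ### Windows and tents -/

/-- The mass that `μ` gives to the window `(z, z + t]`. -/
noncomputable def winMass (μ : Measure ℝ) (t z : ℝ) : ℝ := μ.real (Ioc z (z + t))

/-- The tent function `(t - |u|)₊`. -/
noncomputable def tent (t u : ℝ) : ℝ := max (t - |u|) 0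

lemma measurable_winMass (μ : Measure ℝ) [IsProbabilityMeasure μ] (t : ℝ) :
    Measurable (winMass μ t) := by
  have hS : MeasurableSet {p : ℝ × ℝ | p.1 < p.2 ∧ p.2 ≤ p.1 + t} :=
    (measurableSet_lt measurable_fst measurable_snd).inter
      (measurableSet_le measurable_snd (measurable_fst.add_const t))
  exact (measurable_measure_prodMk_left (ν := μ) hS).ennreal_toReal

lemma winMass_nonneg (μ : Measure ℝ) (t z : ℝ) : 0 ≤ winMass μ t z := measureReal_nonneg

lemma winMass_le_one (μ : Measure ℝ) [IsProbabilityMeasure μ] (t z : ℝ) :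
    winMass μ t z ≤ 1 := measureReal_le_one

lemma winMass_eq_zero {a b : ℝ} {μ : Measure ℝ} (hμ : μ (Icc a b)ᶜ = 0) {t z : ℝ}
    (hz : z ∉ Icc (a - t) b) : winMass μ t z = 0 := by
  have : Ioc z (z + t) ⊆ (Icc a b)ᶜ := by
    intro y hy hy'
    exact hz ⟨by linarith [hy.2, hy'.1], by linarith [hy.1, hy'.2]⟩
  simp [winMass, Measure.real, measure_mono_null this hμ]

lemma integrable_of_bdd_supp {φ : ℝ → ℝ} (hm : Measurable φ) {c d C : ℝ}
    (hb : ∀ z, |φ z| ≤ C) (hs : ∀ z, z ∉ Icc c d → φ z = 0) : Integrable φ := by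
  rw [← integrableOn_iff_integrable_of_support_subset (s := Icc c d)
    (fun z hz => by by_contra h; exact hz (hs z h))]
  exact Measure.integrableOn_of_bounded (by simp) hm.aestronglyMeasurable
    (Filter.Eventually.of_forall hb)

lemma integrable_winMass {a b : ℝ} {μ : Measure ℝ} [IsProbabilityMeasure μ]
    (hμ : μ (Icc a b)ᶜ = 0) (t : ℝ) : Integrable (winMass μ t) :=
  integrable_of_bdd_supp (measurable_winMass μ t) (C := 1)
    (fun z => by rw [abs_of_nonneg (winMass_nonneg ..)]; exact winMass_le_one ..)
    (fun _ => winMass_eq_zero hμ)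

/-- Fubini: integrating over the window `[y - t, y)` and then in `y` against `μ` weights `φ z` by the
mass of `(z, z + t]`. -/
lemma integral_window (μ : Measure ℝ) [IsProbabilityMeasure μ] {φ : ℝ → ℝ} (hφ : Integrable φ)
    (t : ℝ) :
    ∫ y, (∫ z in Ico (y - t) y, φ z) ∂μ = ∫ z, φ z * winMass μ t z := by
  have hS : MeasurableSet {p : ℝ × ℝ | p.2 < p.1 ∧ p.1 ≤ p.2 + t} :=
    (measurableSet_lt measurable_snd measurable_fst).inter
      (measurableSet_le measurable_fst (measurable_snd.add_const t))
  have hi : Integrable (indicator {p : ℝ × ℝ | p.2 < p.1 ∧ p.1 ≤ p.2 + t} fun p => φ p.2)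
      (μ.prod volume) := (hφ.comp_snd μ).indicator hS
  have h := integral_integral_swap (μ := μ) (ν := volume)
    (f := fun y z => indicator {p : ℝ × ℝ | p.2 < p.1 ∧ p.1 ≤ p.2 + t} (fun p => φ p.2) (y, z)) hi
  convert h using 1
  · congr 1; ext y
    rw [← integral_indicator measurableSet_Ico]
    congr 1; ext z
    simp only [indicator, mem_Ico, mem_ofPred_eq, sub_le_iff_le_add]
    congr 1; simp only [and_comm]
  · congr 1; ext z
    have : (fun y => indicator {p : ℝ × ℝ | p.2 < p.1 ∧ p.1 ≤ p.2 + t} (fun p => φ p.2) (y, z))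
        = indicator (Ioc z (z + t)) (fun _ => φ z) := by
      ext y; simp [indicator]
    rw [this, integral_indicator_const _ measurableSet_Ioc, smul_eq_mul, mul_comm]; rfl

lemma tent_nonneg (t u : ℝ) : 0 ≤ tent t u := le_max_right _ _

lemma tent_le (t u : ℝ) : tent t u ≤ |t| :=
  max_le (by linarith [le_abs_self t, abs_nonneg u]) (abs_nonneg t)

@[fun_prop]
lemma continuous_tent : Continuous fun p : ℝ × ℝ => tent p.1 p.2 := by unfold tent; fun_prop

lemma integrable_tent (π : Measure (ℝ × ℝ)) [IsProbabilityMeasure π] (t : ℝ) :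
    Integrable (fun p : ℝ × ℝ => tent t (p.1 - p.2)) π := by
  refine Integrable.of_bound (C := |t|) ?_ (Filter.Eventually.of_forall fun p => ?_)
  · unfold tent; exact Continuous.aestronglyMeasurable (by fun_prop)
  · rw [Real.norm_eq_abs, abs_of_nonneg (tent_nonneg ..)]; exact tent_le ..

/-- Pairing of two measures against the tent kernel of width `t`. -/
noncomputable def tentPair (t : ℝ) (μ ν : Measure ℝ) : ℝ :=
  ∫ p, tent t (p.1 - p.2) ∂(μ.prod ν)

lemma volume_window_inter (t x y : ℝ) :
    volume.real (Ico (y - t) y ∩ Ico (x - t) x) = tent t (y - x) := by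
  rw [Ico_inter_Ico, Real.volume_real_Ico, tent]
  congr 1
  rcases le_total x y with h | h
  · rw [max_eq_left (by linarith), min_eq_right h, abs_of_nonneg (by linarith)]; ring
  · rw [max_eq_right (by linarith), min_eq_left h, abs_of_nonpos (by linarith)]; ring

/-- The windows `(z, z + t]` that contain both `x` and `y` are those with `z` in a set of length
`tent t (x - y)`. -/
lemma integral_winMass_mul {a b : ℝ} {μ ν : Measure ℝ} [IsProbabilityMeasure μ]
    [IsProbabilityMeasure ν] (hν : ν (Icc a b)ᶜ = 0) (t : ℝ) :
    ∫ z, winMass μ t z * winMass ν t z = tentPair t μ ν := by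
  rw [tentPair, integral_prod _ (integrable_tent _ t)]
  simp_rw [mul_comm (winMass μ t _)]
  rw [← integral_window μ (integrable_winMass hν t)]
  congr 1; ext y
  have h := integral_window ν (φ := indicator (Ico (y - t) y) 1)
    ((integrable_indicator_iff measurableSet_Ico).2 (integrableOn_const (by simp))) t
  rw [← integral_indicator measurableSet_Ico]
  trans ∫ z, indicator (Ico (y - t) y) 1 z * winMass ν t z
  · congr 1; ext z; simp [indicator]
  · rw [← h]; congr 1; ext x
    rw [setIntegral_indicator measurableSet_Ico, ← volume_window_inter]
    simp [inter_comm]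

/-- The squared `L²` norm of the discrepancy of `μ` and `ν` on windows of length `t`. -/
noncomputable def om (μ ν : Measure ℝ) (t : ℝ) : ℝ := ∫ z, (winMass μ t z - winMass ν t z) ^ 2

lemma om_nonneg (μ ν : Measure ℝ) (t : ℝ) : 0 ≤ om μ ν t := integral_nonneg fun _ => sq_nonneg _

lemma integrable_winMass_mul {a b : ℝ} {μ ν : Measure ℝ} [IsProbabilityMeasure μ]
    [IsProbabilityMeasure ν] (hν : ν (Icc a b)ᶜ = 0) (t : ℝ) :
    Integrable fun z => winMass μ t z * winMass ν t z :=
  integrable_of_bdd_supp ((measurable_winMass μ t).mul (measurable_winMass ν t)) (C := 1)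
    (fun z => by
      rw [abs_of_nonneg (mul_nonneg (winMass_nonneg ..) (winMass_nonneg ..))]
      exact mul_le_one₀ (winMass_le_one ..) (winMass_nonneg ..) (winMass_le_one ..))
    (fun z hz => by rw [winMass_eq_zero hν hz, mul_zero])

section
variable {a b : ℝ} {μ ν : Measure ℝ} [IsProbabilityMeasure μ] [IsProbabilityMeasure ν]

lemma integrable_disc (hμ : μ (Icc a b)ᶜ = 0) (hν : ν (Icc a b)ᶜ = 0) (t : ℝ) :
    Integrable fun z => (winMass μ t z - winMass ν t z) ^ 2 := by
  have := ((integrable_winMass_mul (μ := μ) hμ t).sub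
    ((integrable_winMass_mul (μ := μ) hν t).const_mul 2)).add (integrable_winMass_mul (μ := ν) hν t)
  refine this.congr (Filter.Eventually.of_forall fun z => ?_)
  simp; ring

lemma om_eq (hμ : μ (Icc a b)ᶜ = 0) (hν : ν (Icc a b)ᶜ = 0) (t : ℝ) :
    om μ ν t = tentPair t μ μ - 2 * tentPair t μ ν + tentPair t ν ν := by
  have i1 := integrable_winMass_mul (μ := μ) hμ t
  have i2 := (integrable_winMass_mul (μ := μ) hν t).const_mul 2
  have i3 := integrable_winMass_mul (μ := ν) hν t
  have i12 : Integrable fun z => winMass μ t z * winMass μ t z -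
      2 * (winMass μ t z * winMass ν t z) := i1.sub i2
  rw [← integral_winMass_mul hμ, ← integral_winMass_mul hν, ← integral_winMass_mul hν,
    ← integral_const_mul, ← integral_sub i1 i2, ← integral_add i12 i3, om]
  congr 1; ext z; ring

/-- A window of length `s + u` is the union of windows of length `s` and `u`. -/
lemma om_triangle (hμ : μ (Icc a b)ᶜ = 0) (hν : ν (Icc a b)ᶜ = 0) {s u : ℝ} (hs : 0 ≤ s)
    (hu : 0 ≤ u) : om μ ν s ≤ 2 * om μ ν (s + u) + 2 * om μ ν u := by
  have i1 := integrable_disc hμ hν (s + u)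
  have i2 := (integrable_disc hμ hν u).comp_add_right s
  have key : ∀ (κ : Measure ℝ) [IsProbabilityMeasure κ] (z : ℝ),
      winMass κ (s + u) z = winMass κ s z + winMass κ u (z + s) := by
    intro κ _ z
    have : Ioc z (z + (s + u)) = Ioc z (z + s) ∪ Ioc (z + s) (z + s + u) := by
      rw [Ioc_union_Ioc_eq_Ioc (by linarith) (by linarith), add_assoc]
    rw [winMass, this, measureReal_union _ measurableSet_Ioc]; · rfl
    exact Ioc_disjoint_Ioc_of_le le_rfl
  have e2 : om μ ν u = ∫ z, (winMass μ u (z + s) - winMass ν u (z + s)) ^ 2 :=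
    (integral_add_right_eq_self (fun z => (winMass μ u z - winMass ν u z) ^ 2) s).symm
  rw [e2, om, om, ← integral_const_mul, ← integral_const_mul,
    ← integral_add (i1.const_mul 2) (i2.const_mul 2)]
  refine integral_mono (integrable_disc hμ hν s) ((i1.const_mul 2).add (i2.const_mul 2))
    fun z => ?_
  rw [key μ z, key ν z]
  nlinarith [sq_nonneg ((winMass μ s z - winMass ν s z) +
    2 * (winMass μ u (z + s) - winMass ν u (z + s)))]

lemma tentPair_lipschitz (t t' : ℝ) : |tentPair t μ ν - tentPair t' μ ν| ≤ |t - t'| := by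
  rw [tentPair, tentPair, ← integral_sub (integrable_tent _ t) (integrable_tent _ t')]
  have h : ∀ᵐ p ∂(μ.prod ν), ‖tent t (p.1 - p.2) - tent t' (p.1 - p.2)‖ ≤ |t - t'| := by
    refine Filter.Eventually.of_forall fun p => ?_
    rw [Real.norm_eq_abs, tent, tent]
    refine (abs_max_sub_max_le_abs _ _ _).trans (le_of_eq ?_)
    congr 1; ring
  simpa using norm_integral_le_of_norm_le_const h

lemma continuous_tentPair : Continuous fun t => tentPair t μ ν := by
  refine LipschitzWith.continuous (K := 1) (LipschitzWith.of_dist_le_mul fun t t' => ?_)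
  simpa [Real.dist_eq] using tentPair_lipschitz t t'

lemma continuous_om (hμ : μ (Icc a b)ᶜ = 0) (hν : ν (Icc a b)ᶜ = 0) : Continuous (om μ ν) := by
  rw [funext (om_eq hμ hν)]
  exact (continuous_tentPair.sub (continuous_tentPair.const_mul 2)).add continuous_tentPair

/-- For `s ≤ η` the tent of width `s` lies below `s / η` times the tent of width `η`. -/
lemma tentPair_scale {s η : ℝ} (hs : 0 ≤ s) (hη : 0 < η) (h : s ≤ η) :
    tentPair s μ ν ≤ s / η * tentPair η μ ν := by
  rw [tentPair, tentPair, ← integral_const_mul]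
  refine integral_mono (integrable_tent _ s) ((integrable_tent _ η).const_mul _) fun p => ?_
  have h1 : s / η ≤ 1 := (div_le_one hη).2 h
  have h0 : 0 ≤ s / η := by positivity
  refine max_le ?_ (mul_nonneg h0 (tent_nonneg ..))
  calc s - |p.1 - p.2| ≤ s / η * (η - |p.1 - p.2|) := by
        rw [mul_sub, div_mul_cancel₀ _ hη.ne']
        nlinarith [abs_nonneg (p.1 - p.2)]
    _ ≤ _ := mul_le_mul_of_nonneg_left (le_max_left _ _) h0

lemma om_le (hμ : μ (Icc a b)ᶜ = 0) (hν : ν (Icc a b)ᶜ = 0) (t : ℝ) :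
    om μ ν t ≤ 2 * tentPair t μ μ + 2 * tentPair t ν ν := by
  have i1 := (integrable_winMass_mul (μ := μ) hμ t).const_mul 2
  have i3 := (integrable_winMass_mul (μ := ν) hν t).const_mul 2
  rw [← integral_winMass_mul hμ, ← integral_winMass_mul hν,
    ← integral_const_mul, ← integral_const_mul, ← integral_add i1 i3, om]
  refine integral_mono (integrable_disc hμ hν t) (i1.add i3) fun z => ?_
  simp only
  nlinarith [sq_nonneg (winMass μ t z + winMass ν t z)]

lemma tentPair_le_om (hμ : μ (Icc a b)ᶜ = 0) (hν : ν (Icc a b)ᶜ = 0) (t : ℝ) :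
    tentPair t μ μ ≤ 2 * om μ ν t + 2 * tentPair t ν ν := by
  have i1 := (integrable_disc hμ hν t).const_mul 2
  have i3 := (integrable_winMass_mul (μ := ν) hν t).const_mul 2
  rw [← integral_winMass_mul hμ, ← integral_winMass_mul hν,
    ← integral_const_mul, om, ← integral_const_mul, ← integral_add i1 i3]
  refine integral_mono (integrable_winMass_mul hμ t) (i1.add i3) fun z => ?_
  simp only
  nlinarith [sq_nonneg (winMass μ t z - 2 * winMass ν t z)]

end

/-! ### The truncated logarithmic energy -/

/-- The logarithmic kernel `-log |u|`, truncated at distance `η`: it equals `-log |u|` for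
`|u| ≥ η` and is affine in `|u|` below. -/
noncomputable def logKer (η u : ℝ) : ℝ := 1 - Real.log (max η |u|) - |u| / max η |u|

lemma continuous_logKer {η : ℝ} (hη : 0 < η) : Continuous (logKer η) := by
  have h : ∀ u : ℝ, max η |u| ≠ 0 := fun u => (lt_max_of_lt_left hη).ne'
  unfold logKer
  refine (continuous_const.sub (Continuous.log (by fun_prop) h)).sub
    (Continuous.div (by fun_prop) (by fun_prop) h)

lemma logKer_le {η u : ℝ} (hη : 0 < η) (hu : u ≠ 0) : logKer η u ≤ -Real.log |u| := by
  have hm : 0 < max η |u| := lt_max_of_lt_left hη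
  have hu' : 0 < |u| := abs_pos.2 hu
  have := Real.log_le_sub_one_of_pos (div_pos hu' hm)
  rw [Real.log_div hu'.ne' hm.ne'] at this
  unfold logKer; linarith

lemma logKer_zero {η : ℝ} (hη : 0 < η) : logKer η 0 = 1 - Real.log η := by
  simp [logKer, max_eq_left hη.le]

lemma logKer_of_le {η u : ℝ} (hη : 0 < η) (h : η ≤ |u|) : logKer η u = -Real.log |u| := by
  rw [logKer, max_eq_right h, div_self (hη.trans_le h).ne']; ring

lemma abs_logKer_le {η u R : ℝ} (hη : 0 < η) (hR : η ≤ R) (hu : |u| ≤ R) :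
    |logKer η u| ≤ 2 + |Real.log η| + |Real.log R| := by
  have hm : 0 < max η |u| := lt_max_of_lt_left hη
  have h1 : Real.log η ≤ Real.log (max η |u|) := Real.log_le_log hη (le_max_left _ _)
  have h2 : Real.log (max η |u|) ≤ Real.log R := Real.log_le_log hm (max_le hR hu)
  have h3 : |u| / max η |u| ≤ 1 := (div_le_one hm).2 (le_max_right _ _)
  have h4 : 0 ≤ |u| / max η |u| := by positivity
  unfold logKer
  rw [abs_le]
  constructor <;>
  linarith [neg_abs_le (Real.log η), le_abs_self (Real.log R), abs_nonneg (Real.log η),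
    abs_nonneg (Real.log R)]

/-- The truncated logarithmic kernel is a superposition of tents of width between `η` and `R`,
up to a multiple of the tent of width `R` and a constant. -/
lemma integral_tent_div {η u R : ℝ} (hη : 0 < η) (hR : η ≤ R) (hu : |u| ≤ R) :
    ∫ t in η..R, tent t u / t ^ 2 = logKer η u - tent R u / R + Real.log R := by
  set m := max η |u| with hm
  have hm0 : 0 < m := lt_max_of_lt_left hη
  have hmR : m ≤ R := max_le hR hu
  have hR0 : 0 < R := hη.trans_le hR
  have hc : ∀ c d : ℝ, 0 < c → 0 < d →
      IntervalIntegrable (fun t => tent t u / t ^ 2) volume c d := by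
    intro c d hc hd
    refine ContinuousOn.intervalIntegrable ?_
    refine ContinuousOn.div ?_ (by fun_prop) fun t ht => ?_
    · unfold tent; fun_prop
    · have : 0 < t := (lt_min hc hd).trans_le ht.1
      positivity
  rw [← intervalIntegral.integral_add_adjacent_intervals (hc η m hη hm0) (hc m R hm0 hR0)]
  have e1 : ∫ t in η..m, tent t u / t ^ 2 = 0 := by
    refine intervalIntegral.integral_zero_ae (Filter.Eventually.of_forall fun t ht => ?_)
    rw [uIoc_of_le (le_max_left _ _)] at ht
    have : t ≤ |u| := by
      rcases le_total η |u| with h | h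
      · rw [max_eq_right h] at ht; exact ht.2
      · rw [max_eq_left h] at ht; exact absurd ht.1 (not_lt.2 ht.2)
    rw [tent, max_eq_right (by linarith), zero_div]
  have e2 : ∫ t in m..R, tent t u / t ^ 2 = (Real.log R + |u| / R) - (Real.log m + |u| / m) := by
    refine intervalIntegral.integral_eq_sub_of_hasDerivAt (f := fun t => Real.log t + |u| / t)
      (fun t ht => ?_) (hc m R hm0 hR0)
    rw [uIcc_of_le hmR] at ht
    have ht0 : 0 < t := hm0.trans_le ht.1
    have htu : |u| ≤ t := (le_max_right _ _).trans ht.1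
    have := (Real.hasDerivAt_log ht0.ne').add ((hasDerivAt_inv ht0.ne').const_mul |u|)
    have e : tent t u = t - |u| := max_eq_left (by linarith)
    refine this.congr_deriv ?_
    rw [e]
    field_simp
    ring
  rw [e1, e2, tent, max_eq_left (by linarith), logKer, ← hm]
  field_simp
  ring

/-- Pairing of two measures against the truncated logarithmic kernel. -/
noncomputable def logPair (η : ℝ) (μ ν : Measure ℝ) : ℝ :=
  ∫ p, logKer η (p.1 - p.2) ∂(μ.prod ν)

/-- The truncated logarithmic energy of the signed measure `μ - ν`. -/
noncomputable def logEnergy (η : ℝ) (μ ν : Measure ℝ) : ℝ :=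
  logPair η μ μ - 2 * logPair η μ ν + logPair η ν ν

lemma ae_prod_abs_le {a b : ℝ} {μ ν : Measure ℝ} (hμ : μ (Icc a b)ᶜ = 0) (hν : ν (Icc a b)ᶜ = 0) :
    ∀ᵐ p ∂(μ.prod ν), |p.1 - p.2| ≤ b - a := by
  have h1 : ∀ᵐ p ∂(μ.prod ν), p.1 ∈ Icc a b :=
    Measure.quasiMeasurePreserving_fst.ae (mem_ae_iff.2 hμ)
  have h2 : ∀ᵐ p ∂(μ.prod ν), p.2 ∈ Icc a b :=
    Measure.quasiMeasurePreserving_snd.ae (mem_ae_iff.2 hν)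
  filter_upwards [h1, h2] with p hp1 hp2
  rw [abs_le]; constructor <;> linarith [hp1.1, hp1.2, hp2.1, hp2.2]

section
variable {a b : ℝ} {μ ν : Measure ℝ} [IsProbabilityMeasure μ] [IsProbabilityMeasure ν]

lemma integrable_logKer (hμ : μ (Icc a b)ᶜ = 0) (hν : ν (Icc a b)ᶜ = 0) {η : ℝ} (hη : 0 < η)
    (hR : η ≤ b - a) : Integrable (fun p : ℝ × ℝ => logKer η (p.1 - p.2)) (μ.prod ν) := by
  refine Integrable.of_bound (C := 2 + |Real.log η| + |Real.log (b - a)|)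
    ((continuous_logKer hη).comp (by fun_prop)).aestronglyMeasurable ?_
  filter_upwards [ae_prod_abs_le hμ hν] with p hp
  exact abs_logKer_le hη hR hp

lemma integral_tentPair_div (hμ : μ (Icc a b)ᶜ = 0) (hν : ν (Icc a b)ᶜ = 0) {η : ℝ} (hη : 0 < η)
    (hR : η ≤ b - a) :
    ∫ t in η..(b - a), tentPair t μ ν / t ^ 2 =
      logPair η μ ν - tentPair (b - a) μ ν / (b - a) + Real.log (b - a) := by
  have e : logPair η μ ν - tentPair (b - a) μ ν / (b - a) + Real.log (b - a)
      = ∫ p, (∫ t in η..(b - a), tent t (p.1 - p.2) / t ^ 2) ∂(μ.prod ν) := by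
    have i1 := integrable_logKer hμ hν hη hR
    have i2 := (integrable_tent (μ.prod ν) (b - a)).div_const (b - a)
    have i12 : Integrable (fun p : ℝ × ℝ => logKer η (p.1 - p.2) - tent (b - a) (p.1 - p.2) / (b - a))
      (μ.prod ν) := i1.sub i2
    have : ∫ p, (∫ t in η..(b - a), tent t (p.1 - p.2) / t ^ 2) ∂(μ.prod ν) =
        ∫ p, (logKer η (p.1 - p.2) - tent (b - a) (p.1 - p.2) / (b - a) + Real.log (b - a))
          ∂(μ.prod ν) := by
      refine integral_congr_ae ?_
      filter_upwards [ae_prod_abs_le hμ hν] with p hp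
      exact integral_tent_div hη hR hp
    rw [this, integral_add i12 (integrable_const _), integral_sub i1 i2, integral_div]
    simp [logPair, tentPair]
  rw [e]
  simp_rw [intervalIntegral.integral_of_le hR, tentPair, ← integral_div]
  refine integral_integral_swap (f := fun t (p : ℝ × ℝ) => tent t (p.1 - p.2) / t ^ 2) ?_
  have hm : (volume.restrict (Ioc η (b - a))).prod (μ.prod ν) =
      (volume.prod (μ.prod ν)).restrict (Ioc η (b - a) ×ˢ univ) := by
    rw [← Measure.prod_restrict, Measure.restrict_univ]
  refine Integrable.of_bound (C := (b - a) / η ^ 2) ?_ ?_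
  · refine Measurable.aestronglyMeasurable ?_
    simp only [Function.uncurry_def, tent]
    fun_prop
  · rw [hm]
    refine (ae_restrict_iff' (measurableSet_Ioc.prod MeasurableSet.univ)).2
      (Filter.Eventually.of_forall ?_)
    rintro ⟨t, p⟩ ⟨ht, -⟩
    have ht0 : 0 < t := hη.trans ht.1
    simp only [Function.uncurry_def]
    rw [Real.norm_eq_abs, abs_of_nonneg (div_nonneg (tent_nonneg ..) (by positivity))]
    have := tent_le t (p.1 - p.2)
    rw [abs_of_pos ht0] at this
    exact div_le_div₀ (by linarith) (this.trans ht.2) (by positivity)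
      (pow_le_pow_left₀ hη.le ht.1.le 2)

/-- The energy controls the window discrepancies at all scales between `η` and `b - a`. -/
lemma integral_om_le (hμ : μ (Icc a b)ᶜ = 0) (hν : ν (Icc a b)ᶜ = 0) {η : ℝ} (hη : 0 < η)
    (hR : η ≤ b - a) :
    ∫ t in η..(b - a), om μ ν t / t ^ 2 ≤ logEnergy η μ ν := by
  have hi : ∀ (κ κ' : Measure ℝ) [IsProbabilityMeasure κ] [IsProbabilityMeasure κ'],
      IntervalIntegrable (fun t => tentPair t κ κ' / t ^ 2) volume η (b - a) := by
    intro κ κ' _ _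
    refine ContinuousOn.intervalIntegrable ?_
    refine ContinuousOn.div continuous_tentPair.continuousOn (by fun_prop) fun t ht => ?_
    rw [uIcc_of_le hR] at ht
    have : 0 < t := hη.trans_le ht.1
    positivity
  have e : ∫ t in η..(b - a), om μ ν t / t ^ 2 = (∫ t in η..(b - a), tentPair t μ μ / t ^ 2)
      - 2 * (∫ t in η..(b - a), tentPair t μ ν / t ^ 2)
      + ∫ t in η..(b - a), tentPair t ν ν / t ^ 2 := by
    rw [← intervalIntegral.integral_const_mul,
      ← intervalIntegral.integral_sub (hi μ μ) ((hi μ ν).const_mul 2),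
      ← intervalIntegral.integral_add ((hi μ μ).sub ((hi μ ν).const_mul 2)) (hi ν ν)]
    congr 1; ext t
    rw [om_eq hμ hν]; ring
  have h0 : 0 ≤ om μ ν (b - a) / (b - a) := div_nonneg (om_nonneg ..) (by linarith)
  rw [om_eq hμ hν] at h0
  rw [e, integral_tentPair_div hμ hμ hη hR, integral_tentPair_div hμ hν hη hR,
    integral_tentPair_div hν hν hη hR, logEnergy]
  ring_nf at h0 ⊢
  linarith

lemma logEnergy_nonneg (hμ : μ (Icc a b)ᶜ = 0) (hν : ν (Icc a b)ᶜ = 0) {η : ℝ} (hη : 0 < η)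
    (hR : η ≤ b - a) : 0 ≤ logEnergy η μ ν :=
  (intervalIntegral.integral_nonneg hR fun t _ =>
    div_nonneg (om_nonneg μ ν t) (sq_nonneg t)).trans (integral_om_le hμ hν hη hR)

/-- Average `om_triangle` over `u ∈ [s, 2 s]` and compare with the energy through `integral_om_le`. -/
lemma om_le_of_le (hμ : μ (Icc a b)ᶜ = 0) (hν : ν (Icc a b)ᶜ = 0) {η s : ℝ} (hη : 0 < η)
    (hs : η ≤ s) (hR : 3 * s ≤ b - a) : om μ ν s ≤ 18 * s * logEnergy η μ ν := by
  have hs0 : 0 < s := hη.trans_le hs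
  have hc := continuous_om hμ hν
  have hi : ∀ c d : ℝ, IntervalIntegrable (om μ ν) volume c d := fun c d =>
    hc.intervalIntegrable c d
  have h1 : s * om μ ν s ≤ 2 * ∫ t in s..(3 * s), om μ ν t := by
    have : ∫ u in s..(2 * s), om μ ν s ≤
        ∫ u in s..(2 * s), (2 * om μ ν (s + u) + 2 * om μ ν u) := by
      refine intervalIntegral.integral_mono_on (by linarith) (by simp) ?_ fun u hu => ?_
      · exact Continuous.intervalIntegrable (by fun_prop) _ _
      · exact om_triangle hμ hν hs0.le (hs0.le.trans hu.1)
    rw [intervalIntegral.integral_const, smul_eq_mul, intervalIntegral.integral_add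
      (Continuous.intervalIntegrable (by fun_prop) _ _)
      (Continuous.intervalIntegrable (by fun_prop) _ _),
      intervalIntegral.integral_const_mul, intervalIntegral.integral_const_mul,
      intervalIntegral.integral_comp_add_left (fun t => om μ ν t)] at this
    rw [← intervalIntegral.integral_add_adjacent_intervals (hi s (2 * s)) (hi (2 * s) (3 * s))]
    rw [show s + s = 2 * s by ring, show s + 2 * s = 3 * s by ring] at this
    linarith
  have hi2 : ∀ c d : ℝ, η ≤ c → c ≤ d →
      IntervalIntegrable (fun t => om μ ν t / t ^ 2) volume c d := by
    intro c d h h'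
    refine ContinuousOn.intervalIntegrable (hc.continuousOn.div (by fun_prop) fun t ht => ?_)
    rw [uIcc_of_le h'] at ht
    have : 0 < t := hη.trans_le (h.trans ht.1)
    positivity
  have h2 : ∫ t in s..(3 * s), om μ ν t ≤ 9 * s ^ 2 * ∫ t in s..(3 * s), om μ ν t / t ^ 2 := by
    rw [← intervalIntegral.integral_const_mul]
    refine intervalIntegral.integral_mono_on (by linarith) (hi _ _)
      ((hi2 _ _ hs (by linarith)).const_mul _) fun t ht => ?_
    have ht0 : 0 < t := hs0.trans_le ht.1
    rw [mul_div_assoc', le_div_iff₀ (by positivity), mul_comm]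
    exact mul_le_mul_of_nonneg_right (by nlinarith [ht.2]) (om_nonneg ..)
  have h3 : ∫ t in s..(3 * s), om μ ν t / t ^ 2 ≤ ∫ t in η..(b - a), om μ ν t / t ^ 2 := by
    refine intervalIntegral.integral_mono_interval hs (by linarith) hR
      (Filter.Eventually.of_forall fun t => div_nonneg (om_nonneg μ ν t) (sq_nonneg t))
      (hi2 _ _ le_rfl (by linarith))
  have h4 := integral_om_le hμ hν hη (by linarith : η ≤ b - a)
  have h5 : s * om μ ν s ≤ s * (18 * s * logEnergy η μ ν) := by
    have : 9 * s ^ 2 * ∫ t in s..(3 * s), om μ ν t / t ^ 2 ≤ 9 * s ^ 2 * logEnergy η μ ν :=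
      mul_le_mul_of_nonneg_left (h3.trans h4) (by positivity)
    nlinarith
  exact le_of_mul_le_mul_left h5 hs0

/-- Window discrepancies are linear in the window length at every scale; below `η` this uses the
positivity of `μ` and `ν` in place of the energy. -/
lemma om_le_linear (hμ : μ (Icc a b)ᶜ = 0) (hν : ν (Icc a b)ᶜ = 0) {η s K : ℝ} (hη : 0 < η)
    (hηR : 3 * η ≤ b - a) (hs : 0 < s) (hR : 3 * s ≤ b - a)
    (hK : tentPair η ν ν ≤ K * η ^ 2) (hK0 : 0 ≤ K) :
    om μ ν s ≤ s * (72 * logEnergy η μ ν + 6 * K * η) := by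
  have hE := logEnergy_nonneg hμ hν hη (by linarith : η ≤ b - a)
  rcases le_total η s with h | h
  · have := om_le_of_le hμ hν hη h hR
    have h2 : 0 ≤ s * logEnergy η μ ν := by positivity
    have h3 : 0 ≤ s * (K * η) := by positivity
    nlinarith
  · have h1 := om_le hμ hν s
    have h2 := tentPair_scale (μ := μ) (ν := μ) hs.le hη h
    have h3 := tentPair_scale (μ := ν) (ν := ν) hs.le hη h
    have h4 := tentPair_le_om hμ hν η
    have h5 := om_le_of_le hμ hν hη le_rfl hηR
    calc om μ ν s ≤ s / η * (2 * tentPair η μ μ + 2 * tentPair η ν ν) := by linarith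
      _ ≤ s / η * (4 * (18 * η * logEnergy η μ ν) + 6 * (K * η ^ 2)) :=
        mul_le_mul_of_nonneg_left (by linarith) (by positivity)
      _ = _ := by field_simp; ring

end

/-! ### Duality between window discrepancies and linear statistics -/

lemma sq_integral_mul_le {α : Type*} [MeasurableSpace α] {m : Measure α} {φ ψ : α → ℝ}
    (h1 : Integrable (fun x => φ x ^ 2) m) (h2 : Integrable (fun x => ψ x ^ 2) m)
    (h3 : Integrable (fun x => φ x * ψ x) m) :
    (∫ x, φ x * ψ x ∂m) ^ 2 ≤ (∫ x, φ x ^ 2 ∂m) * ∫ x, ψ x ^ 2 ∂m := by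
  have key : ∀ r : ℝ, 0 ≤ (∫ x, ψ x ^ 2 ∂m) * (r * r) + 2 * (∫ x, φ x * ψ x ∂m) * r
      + ∫ x, φ x ^ 2 ∂m := by
    intro r
    have e : ∫ x, (φ x + r * ψ x) ^ 2 ∂m = (∫ x, ψ x ^ 2 ∂m) * (r * r) +
        2 * (∫ x, φ x * ψ x ∂m) * r + ∫ x, φ x ^ 2 ∂m := by
      have i2 := h2.const_mul (r * r)
      have i3 := h3.const_mul (2 * r)
      have i23 : Integrable (fun x => r * r * ψ x ^ 2 + 2 * r * (φ x * ψ x)) m := i2.add i3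
      have : ∀ x, (φ x + r * ψ x) ^ 2 = (r * r * ψ x ^ 2 + 2 * r * (φ x * ψ x)) + φ x ^ 2 :=
        fun x => by ring
      simp_rw [this]
      rw [integral_add i23 h1, integral_add i2 i3, integral_const_mul, integral_const_mul]
      ring
    rw [← e]; exact integral_nonneg fun x => sq_nonneg _
  have := discrim_le_zero key
  rw [discrim] at this
  nlinarith

/-- One-dimensional Agmon inequality for a function vanishing at a point of the interval. -/
lemma agmon {a b : ℝ} {g h : ℝ → ℝ} (hg : ∀ x, HasDerivAt g (h x) x) (hh : Continuous h)
    {x₀ x : ℝ} (hx₀ : x₀ ∈ Icc a b) (h0 : g x₀ = 0) (hx : x ∈ Icc a b) :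
    g x ^ 2 ≤ 2 * (√(∫ l in Icc a b, g l ^ 2) * √(∫ l in Icc a b, h l ^ 2)) := by
  have hgc : Continuous g := continuous_iff_continuousAt.2 fun x => (hg x).continuousAt
  have hftc : ∫ y in x₀..x, 2 * (g y * h y) = g x ^ 2 - g x₀ ^ 2 := by
    refine intervalIntegral.integral_eq_sub_of_hasDerivAt (f := fun y => g y ^ 2) (fun y _ => ?_)
      (Continuous.intervalIntegrable (by fun_prop) _ _)
    refine ((hg y).pow 2).congr_deriv ?_
    simp; ring
  have hcs := sq_integral_mul_le (m := volume.restrict (Icc a b)) (φ := fun y => |g y|)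
    (ψ := fun y => |h y|) (Continuous.integrableOn_Icc (by fun_prop))
    (Continuous.integrableOn_Icc (by fun_prop)) (Continuous.integrableOn_Icc (by fun_prop))
  simp only [sq_abs] at hcs
  have hle : g x ^ 2 ≤ 2 * ∫ y in Icc a b, |g y| * |h y| := by
    have h1 : g x ^ 2 = |∫ y in x₀..x, 2 * (g y * h y)| := by
      rw [hftc, h0]; simp
    rw [h1, ← integral_const_mul, ← Real.norm_eq_abs]
    refine (intervalIntegral.norm_integral_le_integral_norm_uIoc).trans ?_
    have : ∀ y, ‖2 * (g y * h y)‖ = 2 * (|g y| * |h y|) := fun y => by simp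
    simp_rw [this]
    refine setIntegral_mono_set (Continuous.integrableOn_Icc (by fun_prop))
      (Filter.Eventually.of_forall fun y => by positivity) ?_
    refine (uIoc_subset_uIcc.trans ?_).eventuallyLE
    exact uIcc_subset_Icc hx₀ hx
  have h2 : ∫ y in Icc a b, |g y| * |h y| ≤
      √(∫ l in Icc a b, g l ^ 2) * √(∫ l in Icc a b, h l ^ 2) := by
    rw [← Real.sqrt_mul (integral_nonneg fun y => sq_nonneg _)]
    exact Real.le_sqrt_of_sq_le hcs
  linarith

section
variable {a b : ℝ} {μ ν : Measure ℝ} [IsProbabilityMeasure μ] [IsProbabilityMeasure ν]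

/-- Integrals of `φ` over windows pair with `μ - ν` through the window discrepancies, by Fubini; then
Cauchy-Schwarz applies. -/
lemma sq_window_diff_le (hμ : μ (Icc a b)ᶜ = 0) (hν : ν (Icc a b)ᶜ = 0) {φ : ℝ → ℝ} {c d C : ℝ}
    (hm : Measurable φ) (hb : ∀ z, |φ z| ≤ C) (hs : ∀ z, z ∉ Icc c d → φ z = 0) (t : ℝ) :
    ((∫ y, (∫ z in Ico (y - t) y, φ z) ∂μ) - ∫ y, (∫ z in Ico (y - t) y, φ z) ∂ν) ^ 2 ≤
      (∫ z, φ z ^ 2) * om μ ν t := by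
  have hφ : Integrable φ := integrable_of_bdd_supp hm hb hs
  have hi : ∀ (κ : Measure ℝ) [IsProbabilityMeasure κ],
      Integrable fun z => φ z * winMass κ t z := by
    intro κ _
    refine integrable_of_bdd_supp (hm.mul (measurable_winMass κ t)) (C := C) (c := c) (d := d)
      (fun z => ?_) fun z hz => by rw [hs z hz, zero_mul]
    rw [abs_mul, abs_of_nonneg (winMass_nonneg ..)]
    exact (mul_le_of_le_one_right (abs_nonneg _) (winMass_le_one ..)).trans (hb z)
  rw [integral_window μ hφ, integral_window ν hφ, ← integral_sub (hi μ) (hi ν)]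
  simp_rw [← mul_sub]
  refine sq_integral_mul_le ?_ (integrable_disc hμ hν t) ?_
  · refine integrable_of_bdd_supp (hm.pow_const 2) (C := C ^ 2) (c := c) (d := d)
      (fun z => ?_) fun z hz => by rw [hs z hz]; simp
    rw [abs_pow]; exact pow_le_pow_left₀ (abs_nonneg _) (hb z) 2
  · simp_rw [mul_sub]; exact (hi μ).sub (hi ν)

/-- Duality estimate for a function vanishing somewhere on the interval. -/
lemma duality_aux (hab : a < b) (hμ : μ (Icc a b)ᶜ = 0) (hν : ν (Icc a b)ᶜ = 0) {Q : ℝ}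
    (hQ0 : 0 ≤ Q) (hQ : ∀ s, 0 < s → 3 * s ≤ b - a → om μ ν s ≤ s * Q) {g h : ℝ → ℝ}
    (hg : ∀ x, HasDerivAt g (h x) x) (hh : Continuous h) {x₀ : ℝ} (hx₀ : x₀ ∈ Icc a b)
    (h0 : g x₀ = 0) :
    ((∫ y, g y ∂μ) - ∫ y, g y ∂ν) ^ 2 ≤
      12 * √(∫ l in Icc a b, g l ^ 2) * √(∫ l in Icc a b, h l ^ 2) * Q := by
  have hgc : Continuous g := continuous_iff_continuousAt.2 fun x => (hg x).continuousAt
  have hag := fun x hx => agmon hg hh (x := x) hx₀ h0 hx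
  have eA : √(∫ l in Icc a b, g l ^ 2) ^ 2 = ∫ l in Icc a b, g l ^ 2 :=
    Real.sq_sqrt (integral_nonneg fun y => sq_nonneg _)
  have eB : √(∫ l in Icc a b, h l ^ 2) ^ 2 = ∫ l in Icc a b, h l ^ 2 :=
    Real.sq_sqrt (integral_nonneg fun y => sq_nonneg _)
  have hA0 : 0 ≤ √(∫ l in Icc a b, g l ^ 2) := Real.sqrt_nonneg _
  have hB0 : 0 ≤ √(∫ l in Icc a b, h l ^ 2) := Real.sqrt_nonneg _
  set A := √(∫ l in Icc a b, g l ^ 2)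
  set B := √(∫ l in Icc a b, h l ^ 2)
  have aeμ : ∀ᵐ y ∂μ, y ∈ Icc a b := mem_ae_iff.2 hμ
  have aeν : ∀ᵐ y ∂ν, y ∈ Icc a b := mem_ae_iff.2 hν
  -- the clamped extension of `g` outside `[a, b]`
  set G : ℝ → ℝ := fun y => g (max a (min b y)) with hG
  have hGc : Continuous G := by fun_prop
  have hGI : ∀ y ∈ Icc a b, G y = g y := fun y hy => by
    simp only [hG]; rw [min_eq_right hy.2, max_eq_right hy.1]
  have hGb : ∀ y, G y ^ 2 ≤ 2 * (A * B) := fun y =>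
    hag _ ⟨le_max_left _ _, max_le hab.le (min_le_left _ _)⟩
  have hGb' : ∀ y, |G y| ≤ √(2 * (A * B)) := fun y => Real.abs_le_sqrt (hGb y)
  have hJ0 : ((∫ y, g y ∂μ) - ∫ y, g y ∂ν) = (∫ y, G y ∂μ) - ∫ y, G y ∂ν := by
    congr 1
    · exact integral_congr_ae (by filter_upwards [aeμ] with y hy using (hGI y hy).symm)
    · exact integral_congr_ae (by filter_upwards [aeν] with y hy using (hGI y hy).symm)
  rw [hJ0]
  have hGint : ∀ (κ : Measure ℝ) [IsProbabilityMeasure κ] (u : ℝ),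
      Integrable (fun y => G (y - u)) κ := fun κ _ u =>
    Integrable.of_bound (Continuous.aestronglyMeasurable (by fun_prop)) _
      (Filter.Eventually.of_forall fun y => hGb' _)
  set J : ℝ → ℝ := fun u => (∫ y, G (y - u) ∂μ) - ∫ y, G (y - u) ∂ν with hJ
  have hJ00 : (∫ y, G y ∂μ) - ∫ y, G y ∂ν = J 0 := by simp [hJ]
  rw [hJ00]
  rcases eq_or_lt_of_le (mul_nonneg hA0 hB0) with hAB | hAB
  · have hz : ∀ y, G y = 0 := fun y => by
      have := hGb y; rw [← hAB] at this; nlinarith [sq_nonneg (G y)]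
    simp [hJ, hz]
    positivity
  have hA : 0 < A := lt_of_le_of_ne hA0 (by rintro h; rw [← h] at hAB; simp at hAB)
  have hB : 0 < B := lt_of_le_of_ne hB0 (by rintro h; rw [← h] at hAB; simp at hAB)
  have hAB2 : A ≤ 2 * (b - a) * B := by
    have : A ^ 2 ≤ (b - a) * (2 * (A * B)) := by
      rw [eA]
      have := setIntegral_mono_on (μ := volume) (s := Icc a b) (f := fun l => g l ^ 2)
        (g := fun _ => 2 * (A * B)) (Continuous.integrableOn_Icc (by fun_prop))
        (integrableOn_const (by simp)) measurableSet_Icc hag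
      simpa [hab.le] using this
    nlinarith
  -- the shift length is comparable to `‖g‖₂ / ‖h‖₂`, which balances the two estimates below; the
  -- factor `6` makes it admissible as a window length
  set t := A / (6 * B) with ht
  have ht0 : 0 < t := by positivity
  have htR : 3 * t ≤ b - a := by
    rw [ht, mul_div_assoc', div_le_iff₀ (by positivity)]; linarith
  have htB : t * (6 * B) = A := by rw [ht]; field_simp
  -- shifting by `u` costs at most `B √(u Q)`
  have hshift : ∀ u, 0 < u → 3 * u ≤ b - a → (J 0 - J u) ^ 2 ≤ B ^ 2 * (u * Q) := by
    intro u hu huR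
    obtain ⟨C, hC⟩ := isCompact_Icc.exists_bound_of_continuousOn (hh.continuousOn (s := Icc a b))
    have hφm : Measurable (indicator (Icc a b) h) := hh.measurable.indicator measurableSet_Icc
    have hpt : ∀ y ∈ Icc a b, ∫ z in Ico (y - u) y, indicator (Icc a b) h z = G y - G (y - u) := by
      intro y hy
      have hmy : max a (y - u) ≤ y := max_le hy.1 (by linarith)
      have hset : Ico (y - u) y ∩ Icc a b = Ico (max a (y - u)) y := by
        ext z; simp only [mem_inter_iff, mem_Ico, mem_Icc, max_le_iff]
        constructor
        · rintro ⟨⟨h1, h2⟩, h3, h4⟩; exact ⟨⟨h3, h1⟩, h2⟩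
        · rintro ⟨⟨h3, h1⟩, h2⟩; exact ⟨⟨h1, h2⟩, h3, by linarith [hy.2]⟩
      rw [setIntegral_indicator measurableSet_Icc, hset, integral_Ico_eq_integral_Ioc,
        ← intervalIntegral.integral_of_le hmy,
        intervalIntegral.integral_eq_sub_of_hasDerivAt (fun x _ => hg x)
          (hh.intervalIntegrable _ _), hGI y hy]
      simp only [hG]
      rw [min_eq_right (by linarith [hy.2])]
    have hd := sq_window_diff_le hμ hν (c := a) (d := b) (C := max C 0) hφm (fun z => by
      by_cases hz : z ∈ Icc a b
      · rw [indicator_of_mem hz]; exact (hC z hz).trans (le_max_left _ _)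
      · rw [indicator_of_notMem hz]; simp) (fun z hz => indicator_of_notMem hz _) u
    have e1 : ∀ (κ : Measure ℝ) [IsProbabilityMeasure κ], (∀ᵐ y ∂κ, y ∈ Icc a b) →
        ∫ y, (∫ z in Ico (y - u) y, indicator (Icc a b) h z) ∂κ =
          (∫ y, G (y - 0) ∂κ) - ∫ y, G (y - u) ∂κ := by
      intro κ _ hκ
      rw [← integral_sub (hGint κ 0) (hGint κ u)]
      refine integral_congr_ae ?_
      filter_upwards [hκ] with y hy
      rw [hpt y hy, sub_zero]
    have e2 : ∫ z, indicator (Icc a b) h z ^ 2 = B ^ 2 := by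
      rw [eB, ← integral_indicator measurableSet_Icc]
      congr 1; ext z
      by_cases hz : z ∈ Icc a b <;> simp [hz]
    rw [e1 μ aeμ, e1 ν aeν, e2] at hd
    have e3 : J 0 - J u = (∫ y, G (y - 0) ∂μ) - (∫ y, G (y - u) ∂μ) -
        ((∫ y, G (y - 0) ∂ν) - ∫ y, G (y - u) ∂ν) := by simp only [hJ]; ring
    rw [e3]
    exact hd.trans (mul_le_mul_of_nonneg_left (hQ u hu huR) (by positivity))
  -- the average over shifts
  have havg : (∫ u in 0..t, J u) ^ 2 ≤ (4 / 3 * A ^ 2) * (t * Q) := by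
    have hpt : ∀ y ∈ Icc a b, ∫ z in Ico (y - t) y, indicator (Icc (a - t) b) G z =
        ∫ u in 0..t, G (y - u) := by
      intro y hy
      have hset : Ico (y - t) y ∩ Icc (a - t) b = Ico (y - t) y :=
        inter_eq_left.2 fun z hz => ⟨by linarith [hz.1, hy.1], by linarith [hz.2, hy.2]⟩
      rw [setIntegral_indicator measurableSet_Icc, hset, integral_Ico_eq_integral_Ioc,
        ← intervalIntegral.integral_of_le (by linarith),
        intervalIntegral.integral_comp_sub_left (fun z => G z), sub_zero]
    have hd := sq_window_diff_le hμ hν (c := a - t) (d := b) (C := √(2 * (A * B)))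
      (hGc.measurable.indicator (measurableSet_Icc (a := a - t) (b := b))) (fun z => by
      by_cases hz : z ∈ Icc (a - t) b
      · rw [indicator_of_mem hz]; exact hGb' z
      · rw [indicator_of_notMem hz]; simp) (fun z hz => indicator_of_notMem hz _) t
    have hsw : ∀ (κ : Measure ℝ) [IsProbabilityMeasure κ],
        Integrable (Function.uncurry fun u y => G (y - u))
          ((volume.restrict (Ioc 0 t)).prod κ) := fun κ _ =>
      Integrable.of_bound (C := √(2 * (A * B))) (Continuous.aestronglyMeasurable (by fun_prop))
        (Filter.Eventually.of_forall fun p => hGb' _)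
    have e1 : ∀ (κ : Measure ℝ) [IsProbabilityMeasure κ], (∀ᵐ y ∂κ, y ∈ Icc a b) →
        ∫ y, (∫ z in Ico (y - t) y, indicator (Icc (a - t) b) G z) ∂κ =
          ∫ u in 0..t, ∫ y, G (y - u) ∂κ := by
      intro κ _ hκ
      rw [intervalIntegral.integral_of_le ht0.le, integral_integral_swap (hsw κ)]
      refine integral_congr_ae ?_
      filter_upwards [hκ] with y hy
      rw [hpt y hy, intervalIntegral.integral_of_le ht0.le]
    have hii : ∀ (κ : Measure ℝ) [IsProbabilityMeasure κ],
        IntervalIntegrable (fun u => ∫ y, G (y - u) ∂κ) volume 0 t := fun κ _ =>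
      (intervalIntegrable_iff_integrableOn_Ioc_of_le ht0.le).2 (hsw κ).integral_prod_left
    rw [e1 μ aeμ, e1 ν aeν, ← intervalIntegral.integral_sub (hii μ) (hii ν)] at hd
    have e2 : ∫ z, indicator (Icc (a - t) b) G z ^ 2 ≤ 4 / 3 * A ^ 2 := by
      have : ∫ z, indicator (Icc (a - t) b) G z ^ 2 = ∫ z in (a - t)..b, G z ^ 2 := by
        rw [intervalIntegral.integral_of_le (by linarith), ← integral_Icc_eq_integral_Ioc,
          ← integral_indicator measurableSet_Icc]
        congr 1; ext z
        by_cases hz : z ∈ Icc (a - t) b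
        · rw [indicator_of_mem hz, indicator_of_mem hz]
        · rw [indicator_of_notMem hz, indicator_of_notMem hz]; simp
      have hci : ∀ c d : ℝ, IntervalIntegrable (fun z => G z ^ 2) volume c d := fun c d =>
        Continuous.intervalIntegrable (by fun_prop) _ _
      rw [this, ← intervalIntegral.integral_add_adjacent_intervals (hci (a - t) a) (hci a b)]
      have h1 : ∫ z in (a - t)..a, G z ^ 2 ≤ t * (2 * (A * B)) := by
        have := intervalIntegral.integral_mono_on (μ := volume) (by linarith : a - t ≤ a)
          (hci (a - t) a) (intervalIntegrable_const (c := 2 * (A * B))) fun z _ => hGb z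
        rw [intervalIntegral.integral_const, smul_eq_mul] at this
        linarith
      have h2 : ∫ z in a..b, G z ^ 2 = A ^ 2 := by
        rw [eA, intervalIntegral.integral_of_le hab.le, ← integral_Icc_eq_integral_Ioc]
        exact setIntegral_congr_fun measurableSet_Icc fun z hz => by simp only [hGI z hz]
      nlinarith
    refine hd.trans ?_
    exact mul_le_mul e2 (hQ t ht0 htR) (om_nonneg ..) (by positivity)
  have hdiff : |∫ u in 0..t, (J 0 - J u)| ≤ B * √(t * Q) * |t - 0| := by
    rw [← Real.norm_eq_abs]
    refine intervalIntegral.norm_integral_le_of_norm_le_const fun u hu => ?_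
    rw [uIoc_of_le ht0.le] at hu
    have h1 := hshift u hu.1 (by linarith [hu.2])
    have h2 : (J 0 - J u) ^ 2 ≤ B ^ 2 * (t * Q) :=
      h1.trans (by have := hu.2; gcongr)
    rw [← Real.sqrt_sq hB.le, ← Real.sqrt_mul (sq_nonneg B)]
    exact Real.abs_le_sqrt h2
  have hJi : IntervalIntegrable J volume 0 t := by
    have hii : ∀ (κ : Measure ℝ) [IsProbabilityMeasure κ],
        Continuous (fun u => ∫ y, G (y - u) ∂κ) := fun κ _ =>
      continuous_of_dominated (fun u => Continuous.aestronglyMeasurable (by fun_prop))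
        (fun u => Filter.Eventually.of_forall fun y => hGb' _) (integrable_const _)
        (Filter.Eventually.of_forall fun y => by fun_prop)
    exact ((hii μ).sub (hii ν)).intervalIntegrable _ _
  rw [intervalIntegral.integral_sub intervalIntegrable_const hJi,
    intervalIntegral.integral_const, smul_eq_mul, sub_zero, abs_of_pos ht0] at hdiff
  set S := √(t * Q) with hS
  have hS2 : S ^ 2 = t * Q := Real.sq_sqrt (by positivity)
  have hS0 : 0 ≤ S := Real.sqrt_nonneg _
  have havg' : |∫ u in 0..t, J u| ≤ 7 / 6 * A * S := by
    refine abs_le_of_sq_le_sq (havg.trans ?_) (by positivity)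
    rw [← hS2]
    have : 0 ≤ A ^ 2 * S ^ 2 := by positivity
    nlinarith
  have hfin : |J 0| ≤ 8 * B * S := by
    have h1 : |t * J 0| ≤ B * S * t + 7 / 6 * A * S := by
      have := abs_add_le (t * J 0 - ∫ u in 0..t, J u) (∫ u in 0..t, J u)
      rw [sub_add_cancel] at this
      linarith
    rw [abs_mul, abs_of_pos ht0, ← htB] at h1
    have : t * |J 0| ≤ t * (8 * B * S) := by nlinarith
    exact le_of_mul_le_mul_left this ht0
  calc J 0 ^ 2 = |J 0| ^ 2 := (sq_abs _).symm
    _ ≤ (8 * B * S) ^ 2 := pow_le_pow_left₀ (abs_nonneg _) hfin 2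
    _ = 64 * B ^ 2 * (t * Q) := by rw [← hS2]; ring
    _ = 64 / 6 * (t * (6 * B)) * B * Q := by ring
    _ ≤ 12 * A * B * Q := by
      rw [htB]
      have : 0 ≤ A * B * Q := by positivity
      nlinarith

/-- Duality: linear window discrepancies bound linear statistics. -/
lemma duality (hab : a < b) (hμ : μ (Icc a b)ᶜ = 0) (hν : ν (Icc a b)ᶜ = 0) {Q : ℝ}
    (hQ0 : 0 ≤ Q) (hQ : ∀ s, 0 < s → 3 * s ≤ b - a → om μ ν s ≤ s * Q) {f h : ℝ → ℝ}
    (hf : ∀ x, HasDerivAt f (h x) x) (hh : Continuous h) :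
    ((∫ y, f y ∂μ) - ∫ y, f y ∂ν) ^ 2 ≤
      24 * √(∫ l in Icc a b, f l ^ 2) * √(∫ l in Icc a b, h l ^ 2) * Q := by
  have hfc : Continuous f := continuous_iff_continuousAt.2 fun x => (hf x).continuousAt
  -- subtracting the value of least modulus keeps the `L²` norm under control
  obtain ⟨x₀, hx₀, hmin⟩ := isCompact_Icc.exists_isMinOn (nonempty_Icc.2 hab.le)
    (hfc.abs.continuousOn (s := Icc a b))
  have hd := duality_aux hab hμ hν hQ0 hQ (g := fun x => f x - f x₀) (fun x => (hf x).sub_const _)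
    hh hx₀ (sub_self _)
  have hi : ∀ (κ : Measure ℝ) [IsProbabilityMeasure κ], κ (Icc a b)ᶜ = 0 → Integrable f κ := by
    intro κ _ hκ
    obtain ⟨C, hC⟩ := isCompact_Icc.exists_bound_of_continuousOn (hfc.continuousOn (s := Icc a b))
    have : ∀ᵐ y ∂κ, y ∈ Icc a b := mem_ae_iff.2 hκ
    exact Integrable.of_bound hfc.aestronglyMeasurable C
      (by filter_upwards [this] with y hy using hC y hy)
  rw [integral_sub (hi μ hμ) (integrable_const _), integral_sub (hi ν hν) (integrable_const _)] at hd
  simp only [integral_const, probReal_univ, one_smul, sub_sub_sub_cancel_right] at hd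
  refine hd.trans ?_
  have hA : √(∫ l in Icc a b, (f l - f x₀) ^ 2) ≤ 2 * √(∫ l in Icc a b, f l ^ 2) := by
    rw [show (2 : ℝ) = √(2 ^ 2) by simp, ← Real.sqrt_mul (by positivity)]
    refine Real.sqrt_le_sqrt ?_
    rw [← integral_const_mul]
    refine setIntegral_mono_on (Continuous.integrableOn_Icc (by fun_prop))
      (Continuous.integrableOn_Icc (by fun_prop)) measurableSet_Icc fun x hx => ?_
    have h1 : |f x₀| ≤ |f x| := hmin hx
    have h2 : |f x - f x₀| ≤ 2 * |f x| := (abs_sub _ _).trans (by linarith)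
    calc (f x - f x₀) ^ 2 = |f x - f x₀| ^ 2 := (sq_abs _).symm
      _ ≤ (2 * |f x|) ^ 2 := pow_le_pow_left₀ (abs_nonneg _) h2 2
      _ = _ := by rw [mul_pow, sq_abs]
  have hB := Real.sqrt_nonneg (∫ l in Icc a b, h l ^ 2)
  calc _ ≤ 12 * (2 * √(∫ l in Icc a b, f l ^ 2)) * √(∫ l in Icc a b, h l ^ 2) * Q := by gcongr
    _ = _ := by ring

end

/-! ### The equilibrium measure -/

/-- The equilibrium data in the form used below: `V` is continuous on the whole line, the density
`ρ` is bounded by `K`, and the effective potential is at most `c` on `[a, b]`, with equality on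
the support `[-2, 2]`. -/
structure EquilData (a b K c : ℝ) (V ρ : ℝ → ℝ) : Prop where
  ha : a < -2
  hb : 2 < b
  V_cont : Continuous V
  ρ_meas : Measurable ρ
  ρ_nonneg : ∀ x, 0 ≤ ρ x
  ρ_le : ∀ x, ρ x ≤ K
  ρ_supp : ∀ x, x ∉ Icc (-2 : ℝ) 2 → ρ x = 0
  ρ_int : ∫ x, ρ x = 1
  equil_le : ∀ x ∈ Icc a b, 2 * (∫ y, Real.log |x - y| * ρ y) - V x ≤ c
  equil_eq : ∀ x ∈ Icc (-2 : ℝ) 2, 2 * (∫ y, Real.log |x - y| * ρ y) - V x = c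

/-- The measure with density `ρ`. -/
noncomputable def rhoM (ρ : ℝ → ℝ) : Measure ℝ := volume.withDensity fun x => ENNReal.ofReal (ρ x)

namespace EquilData
variable {a b K c : ℝ} {V ρ : ℝ → ℝ}

lemma K_pos (hd : EquilData a b K c V ρ) : 0 < K := by
  by_contra h
  have : ∀ x, ρ x = 0 := fun x => le_antisymm ((hd.ρ_le x).trans (not_lt.1 h)) (hd.ρ_nonneg x)
  have h1 := hd.ρ_int
  simp [this] at h1

lemma prob (hd : EquilData a b K c V ρ) : IsProbabilityMeasure (rhoM ρ) := by
  constructor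
  have hi : Integrable ρ := by
    by_contra h
    have := hd.ρ_int
    rw [integral_undef h] at this
    exact zero_ne_one this
  rw [rhoM, withDensity_apply _ MeasurableSet.univ, Measure.restrict_univ,
    ← ofReal_integral_eq_lintegral_ofReal hi (Filter.Eventually.of_forall hd.ρ_nonneg), hd.ρ_int,
    ENNReal.ofReal_one]

lemma integral_rhoM (hd : EquilData a b K c V ρ) (φ : ℝ → ℝ) :
    ∫ x, φ x ∂(rhoM ρ) = ∫ x, φ x * ρ x := by
  rw [rhoM, integral_withDensity_eq_integral_toReal_smul hd.ρ_meas.ennreal_ofReal (by simp)]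
  congr 1; ext x
  rw [ENNReal.toReal_ofReal (hd.ρ_nonneg x), smul_eq_mul, mul_comm]

lemma integrable_rhoM (hd : EquilData a b K c V ρ) {φ : ℝ → ℝ} :
    Integrable φ (rhoM ρ) ↔ Integrable fun x => φ x * ρ x := by
  rw [rhoM, integrable_withDensity_iff hd.ρ_meas.ennreal_ofReal (by simp)]
  simp_rw [ENNReal.toReal_ofReal (hd.ρ_nonneg _)]

lemma supp2 (hd : EquilData a b K c V ρ) : rhoM ρ (Icc (-2 : ℝ) 2)ᶜ = 0 := by
  rw [rhoM, withDensity_apply _ measurableSet_Icc.compl]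
  refine (setLIntegral_congr_fun measurableSet_Icc.compl (fun x hx => ?_)).trans
    (lintegral_zero)
  simp [hd.ρ_supp x hx]

lemma supp (hd : EquilData a b K c V ρ) : rhoM ρ (Icc a b)ᶜ = 0 :=
  measure_mono_null (compl_subset_compl.2 (Icc_subset_Icc hd.ha.le hd.hb.le)) hd.supp2

lemma rhoM_le (hd : EquilData a b K c V ρ) :
    rhoM ρ ≤ K.toNNReal • volume.restrict (Icc a b) := by
  have h1 : rhoM ρ ≤ K.toNNReal • (volume : Measure ℝ) := by
    rw [rhoM]
    refine (withDensity_mono (g := fun _ => ENNReal.ofReal K)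
      (Filter.Eventually.of_forall fun x => ENNReal.ofReal_le_ofReal (hd.ρ_le x))).trans ?_
    rw [withDensity_const]; rfl
  have h2 : rhoM ρ = (rhoM ρ).restrict (Icc a b) :=
    (Measure.restrict_eq_self_of_ae_mem (mem_ae_iff.2 hd.supp)).symm
  rw [h2, ← Measure.restrict_smul]
  exact Measure.restrict_mono_measure h1 _

lemma rhoM_real_Icc_le (hd : EquilData a b K c V ρ) {x y : ℝ} (hxy : x ≤ y) :
    (rhoM ρ).real (Icc x y) ≤ K * (y - x) := by
  have hK := hd.K_pos
  have h1 : rhoM ρ (Icc x y) ≤ ENNReal.ofReal (K * (y - x)) := by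
    refine (hd.rhoM_le _).trans ?_
    rw [Measure.smul_apply, ENNReal.ofReal_mul hK.le, ← Real.volume_Icc]
    exact mul_le_mul_right (Measure.restrict_apply_le _ _) _
  exact ENNReal.toReal_le_of_le_ofReal (mul_nonneg hK.le (by linarith)) h1

/-- The bounded density makes the tent pairing of `ρ` quadratic in the width. -/
lemma tentPair_rhoM_le (hd : EquilData a b K c V ρ) {t : ℝ} (ht : 0 < t) :
    tentPair t (rhoM ρ) (rhoM ρ) ≤ 2 * K * t ^ 2 := by
  have := hd.prob
  have hK := hd.K_pos
  rw [tentPair, integral_prod _ (integrable_tent _ t)]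
  have hin : ∀ y, ∫ x, tent t (y - x) ∂(rhoM ρ) ≤ 2 * K * t ^ 2 := by
    intro y
    have h1 : ∀ x, tent t (y - x) ≤ indicator (Icc (y - t) (y + t)) (fun _ => t) x := by
      intro x
      by_cases hx : x ∈ Icc (y - t) (y + t)
      · rw [indicator_of_mem hx]; simpa [abs_of_pos ht] using tent_le t (y - x)
      · rw [indicator_of_notMem hx, tent, max_eq_right]
        by_contra h
        push Not at h
        have := abs_lt.1 (show |y - x| < t by linarith)
        exact hx ⟨by linarith, by linarith⟩
    have h2 : ∫ x, tent t (y - x) ∂(rhoM ρ) ≤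
        ∫ x, indicator (Icc (y - t) (y + t)) (fun _ => t) x ∂(rhoM ρ) := by
      refine integral_mono_of_nonneg (Filter.Eventually.of_forall fun x => tent_nonneg _ _)
        ((integrable_const _).indicator measurableSet_Icc) (Filter.Eventually.of_forall h1)
    rw [integral_indicator_const _ measurableSet_Icc, smul_eq_mul] at h2
    have h3 := hd.rhoM_real_Icc_le (x := y - t) (y := y + t) (by linarith)
    nlinarith
  refine (integral_mono_of_nonneg (Filter.Eventually.of_forall fun y =>
    integral_nonneg fun x => tent_nonneg _ _) (integrable_const (2 * K * t ^ 2))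
    (Filter.Eventually.of_forall hin)).trans (by simp)

lemma integrable_log_sub (x : ℝ) {c' d' : ℝ} (h : c' ≤ d') :
    IntegrableOn (fun y => Real.log (x - y)) (Icc c' d') := by
  rw [integrableOn_Icc_iff_integrableOn_Ioc, ← intervalIntegrable_iff_integrableOn_Ioc_of_le h]
  have := (intervalIntegral.intervalIntegrable_log' (a := x - c') (b := x - d')).comp_sub_left x
  simpa using this

lemma integrable_log (hd : EquilData a b K c V ρ) (x : ℝ) :
    Integrable (fun y => Real.log |x - y|) (rhoM ρ) := by
  simp_rw [Real.log_abs]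
  have h1 : Integrable (fun y => Real.log (x - y)) (K.toNNReal • volume.restrict (Icc (-2 : ℝ) 2)) :=
    (integrable_log_sub x (by norm_num)).smul_measure_nnreal
  have h2 : rhoM ρ ≤ K.toNNReal • volume.restrict (Icc (-2 : ℝ) 2) := by
    have h2 : rhoM ρ = (rhoM ρ).restrict (Icc (-2 : ℝ) 2) :=
      (Measure.restrict_eq_self_of_ae_mem (mem_ae_iff.2 hd.supp2)).symm
    have h3 := hd.rhoM_le
    rw [h2]
    refine (Measure.restrict_mono_measure h3 _).trans ?_
    rw [Measure.restrict_smul, Measure.restrict_restrict measurableSet_Icc,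
      inter_eq_left.2 (Icc_subset_Icc hd.ha.le hd.hb.le)]
  exact h1.mono_measure h2

lemma integral_abs_log_le (hd : EquilData a b K c V ρ) {x : ℝ} (hx : x ∈ Icc (-2 : ℝ) 2) :
    ∫ y, |Real.log (|x - y|)| ∂(rhoM ρ) ≤ K * ∫ u in Icc (-4 : ℝ) 4, |Real.log u| := by
  have hK := hd.K_pos
  rw [hd.integral_rhoM]
  have h4 : IntegrableOn (fun u => |Real.log u|) (Icc (-4 : ℝ) 4) := by
    have := (integrable_log_sub 0 (show (-4 : ℝ) ≤ 4 by norm_num)).abs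
    simpa [IntegrableOn, Real.log_neg_eq_log] using this
  have hi : Integrable (indicator (Icc (-4 : ℝ) 4) fun u => K * |Real.log u|) :=
    (integrable_indicator_iff measurableSet_Icc).2 (h4.const_mul K)
  calc _ ≤ ∫ y, indicator (Icc (-4 : ℝ) 4) (fun u => K * |Real.log u|) (x - y) := by
        refine integral_mono_of_nonneg (Filter.Eventually.of_forall fun y =>
          mul_nonneg (abs_nonneg _) (hd.ρ_nonneg y)) (hi.comp_sub_left x)
          (Filter.Eventually.of_forall fun y => ?_)
        simp only [Real.log_abs]
        by_cases hy : y ∈ Icc (-2 : ℝ) 2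
        · rw [indicator_of_mem (show x - y ∈ Icc (-4 : ℝ) 4 from
            ⟨by linarith [hx.1, hy.2], by linarith [hx.2, hy.1]⟩), mul_comm]
          exact mul_le_mul_of_nonneg_right (hd.ρ_le y) (abs_nonneg _)
        · rw [hd.ρ_supp y hy, mul_zero]
          exact indicator_nonneg (fun u _ => by positivity) _
    _ = ∫ u, indicator (Icc (-4 : ℝ) 4) (fun u => K * |Real.log u|) u :=
        integral_sub_left_eq_self _ volume x
    _ = _ := by rw [integral_indicator measurableSet_Icc, integral_const_mul]

lemma integrable_log_prod (hd : EquilData a b K c V ρ) :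
    Integrable (fun p : ℝ × ℝ => Real.log |p.1 - p.2|) ((rhoM ρ).prod (rhoM ρ)) := by
  have := hd.prob
  have hm : Measurable fun p : ℝ × ℝ => Real.log |p.1 - p.2| := by fun_prop
  rw [integrable_prod_iff hm.aestronglyMeasurable]
  refine ⟨Filter.Eventually.of_forall fun x => hd.integrable_log x, ?_⟩
  refine Integrable.of_bound (C := K * ∫ u in Icc (-4 : ℝ) 4, |Real.log u|)
    (hm.norm.stronglyMeasurable.integral_prod_right').aestronglyMeasurable ?_
  have : ∀ᵐ x ∂(rhoM ρ), x ∈ Icc (-2 : ℝ) 2 := mem_ae_iff.2 hd.supp2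
  filter_upwards [this] with x hx
  rw [Real.norm_eq_abs, abs_of_nonneg (integral_nonneg fun y => norm_nonneg _)]
  exact hd.integral_abs_log_le hx

/-- Truncating the logarithm at distance `η` changes the potential of `ρ` by `O(η)`. -/
lemma le_integral_logKer (hd : EquilData a b K c V ρ) {η x : ℝ} (hη : 0 < η)
    (hR : η ≤ b - a) (hx : x ∈ Icc a b) :
    -(∫ y, Real.log |x - y| ∂(rhoM ρ)) - 2 * K * η ≤ ∫ y, logKer η (x - y) ∂(rhoM ρ) := by
  have := hd.prob
  have hK := hd.K_pos
  have hlk : Integrable (fun y => logKer η (x - y)) (rhoM ρ) := by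
    refine Integrable.of_bound (C := 2 + |Real.log η| + |Real.log (b - a)|)
      ((continuous_logKer hη).comp (by fun_prop)).aestronglyMeasurable ?_
    have : ∀ᵐ y ∂(rhoM ρ), y ∈ Icc a b := mem_ae_iff.2 hd.supp
    filter_upwards [this] with y hy
    refine abs_logKer_le hη hR ?_
    rw [abs_le]; constructor <;> linarith [hx.1, hx.2, hy.1, hy.2]
  set ψ : ℝ → ℝ := indicator (Icc (-η) η) fun u => Real.log η - Real.log u with hψ
  have hψi : Integrable ψ := by
    refine (integrable_indicator_iff measurableSet_Icc).2 ?_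
    have := integrable_log_sub 0 (show -η ≤ η by linarith)
    simp only [zero_sub, Real.log_neg_eq_log] at this
    exact (integrableOn_const (by simp)).sub this
  have hpt : ∀ u, -Real.log |u| - logKer η u ≤ ψ u := by
    intro u
    by_cases hu : u ∈ Icc (-η) η
    · have h1 : |u| ≤ η := abs_le.2 hu
      rw [hψ, indicator_of_mem hu, logKer, max_eq_left h1, Real.log_abs]
      have : |u| / η ≤ 1 := (div_le_one hη).2 h1
      linarith
    · have h1 : η < |u| := by
        by_contra h
        exact hu (abs_le.1 (not_lt.1 h))
      rw [hψ, indicator_of_notMem hu, logKer_of_le hη h1.le]; simp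
  have hψK : ∀ᵐ y, ψ (x - y) * ρ y ≤ K * ψ (x - y) := by
    have : ∀ᵐ y : ℝ, y ≠ x := by simp [ae_iff]
    filter_upwards [this] with y hy
    rw [mul_comm]
    refine mul_le_mul_of_nonneg_right (hd.ρ_le y) ?_
    by_cases hu : x - y ∈ Icc (-η) η
    swap
    · rw [hψ, indicator_of_notMem hu]
    rw [hψ, indicator_of_mem hu]
    have h1 : |x - y| ≤ η := abs_le.2 hu
    have h2 : 0 < |x - y| := abs_pos.2 (sub_ne_zero.2 hy.symm)
    have := Real.log_le_log h2 h1
    rw [Real.log_abs] at this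
    linarith
  have hψρ : Integrable (fun y => ψ (x - y)) (rhoM ρ) := by
    rw [hd.integrable_rhoM]
    refine ((hψi.comp_sub_left x).bdd_mul (c := K) (f := ρ) hd.ρ_meas.aestronglyMeasurable
      (Filter.Eventually.of_forall fun y => ?_)).congr
      (Filter.Eventually.of_forall fun y => mul_comm _ _)
    rw [Real.norm_eq_abs, abs_of_nonneg (hd.ρ_nonneg y)]; exact hd.ρ_le y
  have h1 : -(∫ y, Real.log |x - y| ∂(rhoM ρ)) - ∫ y, logKer η (x - y) ∂(rhoM ρ) ≤
      ∫ y, ψ (x - y) ∂(rhoM ρ) := by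
    have hn : Integrable (fun y => -Real.log |x - y|) (rhoM ρ) := (hd.integrable_log x).neg
    rw [← integral_neg, ← integral_sub hn hlk]
    exact integral_mono (hn.sub hlk) hψρ fun y => hpt _
  have h2 : ∫ y, ψ (x - y) ∂(rhoM ρ) ≤ K * (2 * η) := by
    rw [hd.integral_rhoM]
    refine (integral_mono_ae (hd.integrable_rhoM.1 hψρ) ((hψi.comp_sub_left x).const_mul K)
      hψK).trans ?_
    rw [integral_const_mul, integral_sub_left_eq_self ψ volume x, hψ,
      integral_indicator measurableSet_Icc, integral_Icc_eq_integral_Ioc,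
      ← intervalIntegral.integral_of_le (by linarith),
      intervalIntegral.integral_sub (by simp) intervalIntegral.intervalIntegrable_log',
      intervalIntegral.integral_const, integral_log, Real.log_neg_eq_log, smul_eq_mul]
    refine le_of_eq ?_
    ring
  linarith

lemma integral_log_le (hd : EquilData a b K c V ρ) {x : ℝ} (hx : x ∈ Icc a b) :
    2 * (∫ y, Real.log |x - y| ∂(rhoM ρ)) ≤ c + V x := by
  rw [hd.integral_rhoM]; linarith [hd.equil_le x hx]

lemma integral_log_eq (hd : EquilData a b K c V ρ) {x : ℝ} (hx : x ∈ Icc (-2 : ℝ) 2) :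
    2 * (∫ y, Real.log |x - y| ∂(rhoM ρ)) = c + V x := by
  rw [hd.integral_rhoM]; linarith [hd.equil_eq x hx]

lemma integrable_cont (hd : EquilData a b K c V ρ) {φ : ℝ → ℝ} (hφ : Continuous φ) :
    Integrable φ (rhoM ρ) := by
  have := hd.prob
  obtain ⟨C, hC⟩ := isCompact_Icc.exists_bound_of_continuousOn (hφ.continuousOn (s := Icc a b))
  have : ∀ᵐ y ∂(rhoM ρ), y ∈ Icc a b := mem_ae_iff.2 hd.supp
  exact Integrable.of_bound hφ.aestronglyMeasurable C
    (by filter_upwards [this] with y hy using hC y hy)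

/-- The equality case of the equilibrium condition, integrated against the equilibrium measure. -/
lemma two_mul_integral_log_prod (hd : EquilData a b K c V ρ) :
    2 * ∫ p, Real.log |p.1 - p.2| ∂((rhoM ρ).prod (rhoM ρ)) = c + ∫ x, V x ∂(rhoM ρ) := by
  have := hd.prob
  rw [integral_prod _ hd.integrable_log_prod, ← integral_const_mul]
  have : ∀ᵐ x ∂(rhoM ρ), x ∈ Icc (-2 : ℝ) 2 := mem_ae_iff.2 hd.supp2
  trans ∫ x, (c + V x) ∂(rhoM ρ)
  · refine integral_congr_ae ?_
    filter_upwards [this] with x hx using hd.integral_log_eq hx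
  · rw [integral_add (integrable_const _) (hd.integrable_cont hd.V_cont)]; simp

lemma ae_prod_ne (hd : EquilData a b K c V ρ) :
    ∀ᵐ p ∂((rhoM ρ).prod (rhoM ρ)), p.1 - p.2 ≠ 0 := by
  have := hd.prob
  have hna : ∀ x, rhoM ρ {x} = 0 := fun x =>
    withDensity_absolutelyContinuous _ _ (by simp)
  have hms : MeasurableSet {p : ℝ × ℝ | p.1 - p.2 ≠ 0} :=
    (measurableSet_eq_fun (by fun_prop) (by fun_prop)).compl
  refine (Measure.ae_prod_iff_ae_ae hms).2 (Filter.Eventually.of_forall fun x => ?_)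
  rw [ae_iff]
  refine measure_mono_null (fun y hy => ?_) (hna x)
  simp only [ne_eq, not_not, mem_ofPred_eq, sub_eq_zero] at hy
  simp [hy]

lemma logPair_rhoM_le (hd : EquilData a b K c V ρ) {η : ℝ} (hη : 0 < η) (hR : η ≤ b - a) :
    logPair η (rhoM ρ) (rhoM ρ) ≤ -∫ p, Real.log |p.1 - p.2| ∂((rhoM ρ).prod (rhoM ρ)) := by
  have := hd.prob
  rw [logPair, ← integral_neg]
  refine integral_mono_ae (integrable_logKer hd.supp hd.supp hη hR) hd.integrable_log_prod.neg ?_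
  filter_upwards [hd.ae_prod_ne] with p hp using logKer_le hη hp

end EquilData

/-! ### The empirical measure and the weight -/

lemma pi_mono_measure {n : ℕ} {μ ν : Measure ℝ} [SigmaFinite μ] [SigmaFinite ν] (h : μ ≤ ν) :
    Measure.pi (fun _ : Fin n => μ) ≤ Measure.pi fun _ : Fin n => ν := by
  refine Measure.le_iff.2 fun s hs => ?_
  rw [Measure.pi, Measure.pi, toMeasure_apply _ _ hs, toMeasure_apply _ _ hs]
  refine OuterMeasure.le_pi.2 (fun t _ => ?_) s
  exact (OuterMeasure.pi_pi_le _ _).trans (Finset.prod_le_prod' fun i _ => h _)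

lemma pi_smul_restrict {n : ℕ} (K : NNReal) (s : Set ℝ) :
    Measure.pi (fun _ : Fin n => K • (volume : Measure ℝ).restrict s) =
      K ^ n • (volume : Measure (Fin n → ℝ)).restrict (univ.pi fun _ => s) := by
  refine Measure.pi_eq fun t _ => ?_
  rw [volume_pi, Measure.restrict_pi_pi, Measure.smul_apply, Measure.pi_pi]
  simp only [Measure.smul_apply, ENNReal.smul_def, smul_eq_mul, Finset.prod_mul_distrib,
    Finset.prod_const, Finset.card_univ, Fintype.card_fin, ENNReal.coe_pow]

lemma two_mul_sum_Ioi {n : ℕ} (g : Fin n → Fin n → ℝ) (hg : ∀ i j, g i j = g j i) :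
    2 * ∑ i, ∑ j ∈ Finset.Ioi i, g i j = (∑ i, ∑ j, g i j) - ∑ i, g i i := by
  have h := Finset.sum_sum_Ioi_add_eq_sum_sum_off_diag g
  have h1 : ∑ i, ∑ j ∈ Finset.Ioi i, (g j i + g i j) = 2 * ∑ i, ∑ j ∈ Finset.Ioi i, g i j := by
    rw [Finset.mul_sum]
    refine Finset.sum_congr rfl fun i _ => ?_
    rw [Finset.mul_sum]
    exact Finset.sum_congr rfl fun j _ => by rw [hg j i]; ring
  rw [← h1, h, ← Finset.sum_sub_distrib]
  refine Finset.sum_congr rfl fun i _ => ?_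
  rw [← Finset.sum_add_sum_compl {i} (g i), Finset.sum_singleton, add_sub_cancel_left]
  exact Finset.sum_congr rfl fun j _ => hg j i

/-- The empirical measure of the configuration `Λ`. -/
noncomputable def emp {n : ℕ} (Λ : Fin n → ℝ) : Measure ℝ :=
  (n : ENNReal)⁻¹ • ∑ i, Measure.dirac (Λ i)

lemma integral_emp {n : ℕ} (Λ : Fin n → ℝ) (φ : ℝ → ℝ) :
    ∫ x, φ x ∂(emp Λ) = (n : ℝ)⁻¹ * ∑ i, φ (Λ i) := by
  rw [emp, integral_smul_measure, integral_finsetSum_measure fun i _ => integrable_dirac (by simp)]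
  simp

lemma prob_emp {n : ℕ} [NeZero n] (Λ : Fin n → ℝ) : IsProbabilityMeasure (emp Λ) := by
  constructor
  simp [emp, ENNReal.inv_mul_cancel, NeZero.ne]

lemma emp_supp {n : ℕ} {Λ : Fin n → ℝ} {a b : ℝ} (h : ∀ i, Λ i ∈ Icc a b) :
    emp Λ (Icc a b)ᶜ = 0 := by
  simp only [emp, Measure.smul_apply, Measure.finsetSum_apply, smul_eq_mul]
  rw [Finset.sum_eq_zero, mul_zero]
  intro i _
  rw [Measure.dirac_apply' _ measurableSet_Icc.compl]
  simpa using h i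

lemma logPair_emp_left {n : ℕ} [NeZero n] {Λ : Fin n → ℝ} {a b η : ℝ} (h : ∀ i, Λ i ∈ Icc a b)
    {ν : Measure ℝ} [IsProbabilityMeasure ν] (hν : ν (Icc a b)ᶜ = 0) (hη : 0 < η)
    (hR : η ≤ b - a) :
    logPair η (emp Λ) ν = (n : ℝ)⁻¹ * ∑ i, ∫ y, logKer η (Λ i - y) ∂ν := by
  have := prob_emp Λ
  rw [logPair, integral_prod _ (integrable_logKer (emp_supp h) hν hη hR), integral_emp]

lemma logPair_emp_emp {n : ℕ} [NeZero n] {Λ : Fin n → ℝ} {a b η : ℝ} (h : ∀ i, Λ i ∈ Icc a b)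
    (hη : 0 < η) (hR : η ≤ b - a) :
    logPair η (emp Λ) (emp Λ) = (n : ℝ)⁻¹ ^ 2 * ∑ i, ∑ j, logKer η (Λ i - Λ j) := by
  have := prob_emp Λ
  rw [logPair_emp_left h (emp_supp h) hη hR]
  have h1 : ∀ i, ∫ y, logKer η (Λ i - y) ∂(emp Λ) = (n : ℝ)⁻¹ * ∑ j, logKer η (Λ i - Λ j) :=
    fun i => integral_emp Λ fun y => logKer η (Λ i - y)
  simp_rw [h1]
  rw [← Finset.mul_sum]; ring

lemma logKer_neg (η u : ℝ) : logKer η (-u) = logKer η u := by simp [logKer]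

lemma continuous_betaWeight {β : ℝ} (hβ : 0 < β) {V : ℝ → ℝ} (hV : Continuous V) (n : ℕ) :
    Continuous (betaWeight β V n) := by
  unfold betaWeight
  refine Continuous.mul ?_ ?_
  · fun_prop
  · refine continuous_finsetProd _ fun i _ => continuous_finsetProd _ fun j _ => ?_
    exact Continuous.rpow_const (by fun_prop) fun _ => Or.inr hβ.le

lemma betaWeight_nonneg (β : ℝ) (V : ℝ → ℝ) (n : ℕ) (Λ : Fin n → ℝ) : 0 ≤ betaWeight β V n Λ :=
  mul_nonneg (Finset.prod_nonneg fun _ _ => (Real.exp_pos _).le)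
    (Finset.prod_nonneg fun _ _ => Finset.prod_nonneg fun _ _ => Real.rpow_nonneg (abs_nonneg _) _)

lemma integrableOn_betaWeight_mul {β : ℝ} (hβ : 0 < β) {V : ℝ → ℝ} (hV : Continuous V) (n : ℕ)
    (a b : ℝ) {g : (Fin n → ℝ) → ℝ} (hg : Continuous g) :
    IntegrableOn (fun Λ => g Λ * betaWeight β V n Λ) (univ.pi fun _ : Fin n => Icc a b) :=
  (hg.mul (continuous_betaWeight hβ hV n)).continuousOn.integrableOn_compact
    (isCompact_univ_pi fun _ => isCompact_Icc)

/-- The exponent of the weight: `betaWeight = exp logWeight` at configurations of distinct points. -/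
noncomputable def logWeight (β : ℝ) (V : ℝ → ℝ) (n : ℕ) (Λ : Fin n → ℝ) : ℝ :=
  -(n * β / 2) * ∑ i, V (Λ i) + β * ∑ i, ∑ j ∈ Finset.Ioi i, Real.log |Λ i - Λ j|

lemma betaWeight_eq_exp {β : ℝ} {V : ℝ → ℝ} {n : ℕ} {Λ : Fin n → ℝ}
    (h : ∀ i, ∀ j ∈ Finset.Ioi i, Λ i - Λ j ≠ 0) :
    betaWeight β V n Λ = Real.exp (logWeight β V n Λ) := by
  rw [betaWeight, logWeight, Real.exp_add, ← Real.exp_sum]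
  congr 1
  · congr 1
    rw [Finset.mul_sum]
    exact Finset.sum_congr rfl fun i _ => by ring
  · rw [Finset.mul_sum, Real.exp_sum]
    refine Finset.prod_congr rfl fun i _ => ?_
    rw [Finset.mul_sum, Real.exp_sum]
    refine Finset.prod_congr rfl fun j hj => ?_
    rw [Real.rpow_def_of_pos (abs_pos.2 (h i j hj)), mul_comm]

/-- Replacing the logarithm by its truncation only increases the weight; the last term removes the
diagonal from the double sum. -/
lemma betaWeight_le {β : ℝ} (hβ : 0 < β) {V : ℝ → ℝ} {n : ℕ} {Λ : Fin n → ℝ} {η : ℝ}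
    (hη : 0 < η) :
    betaWeight β V n Λ ≤ Real.exp (-(β / 2) * (n * ∑ i, V (Λ i) +
      ∑ i, ∑ j, logKer η (Λ i - Λ j) - n * (1 - Real.log η))) := by
  have hs := two_mul_sum_Ioi (fun i j => logKer η (Λ i - Λ j))
    (fun i j => by rw [← logKer_neg, neg_sub])
  simp only [sub_self, logKer_zero hη, Finset.sum_const, Finset.card_univ, Fintype.card_fin,
    nsmul_eq_mul] at hs
  have e : -(β / 2) * (n * ∑ i, V (Λ i) +
      ∑ i, ∑ j, logKer η (Λ i - Λ j) - n * (1 - Real.log η)) =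
      (∑ i, -((n : ℝ) * β * V (Λ i)) / 2) +
        ∑ i, ∑ j ∈ Finset.Ioi i, -β * logKer η (Λ i - Λ j) := by
    have e1 : (∑ i, -((n : ℝ) * β * V (Λ i)) / 2) = -(β / 2) * (n * ∑ i, V (Λ i)) := by
      rw [Finset.mul_sum, Finset.mul_sum]
      exact Finset.sum_congr rfl fun i _ => by ring
    simp_rw [← Finset.mul_sum]
    rw [e1]
    linear_combination (-(β / 2)) * (-hs)
  rw [e, Real.exp_add, Real.exp_sum, betaWeight]
  refine mul_le_mul_of_nonneg_left ?_ (Finset.prod_nonneg fun _ _ => (Real.exp_pos _).le)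
  rw [Real.exp_sum]
  refine Finset.prod_le_prod (fun i _ => Finset.prod_nonneg fun j _ =>
    Real.rpow_nonneg (abs_nonneg _) _) fun i _ => ?_
  rw [Real.exp_sum]
  refine Finset.prod_le_prod (fun j _ => Real.rpow_nonneg (abs_nonneg _) _) fun j _ => ?_
  by_cases hu : Λ i - Λ j = 0
  · rw [hu, abs_zero, Real.zero_rpow hβ.ne']; exact (Real.exp_pos _).le
  · rw [Real.rpow_def_of_pos (abs_pos.2 hu), Real.exp_le_exp]
    have := logKer_le hη hu
    nlinarith

/-! ### Bounds on the weight and on the partition function -/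

namespace EquilData
variable {a b K c : ℝ} {V ρ : ℝ → ℝ}

/-- Upper bound for the weight in terms of the truncated energy of the empirical measure
relative to the equilibrium measure. -/
lemma betaWeight_le_exp_logEnergy (hd : EquilData a b K c V ρ) {β : ℝ} (hβ : 0 < β) {n : ℕ}
    (hn : 1 ≤ n) {Λ : Fin n → ℝ} (h : ∀ i, Λ i ∈ Icc a b) :
    betaWeight β V n Λ ≤ Real.exp (-(β / 2) * ((n : ℝ) ^ 2 * (logEnergy (n : ℝ)⁻¹ (emp Λ) (rhoM ρ)
      - c + ∫ p, Real.log |p.1 - p.2| ∂((rhoM ρ).prod (rhoM ρ))) - 4 * K * n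
      - n * (1 + Real.log n))) := by
  have : NeZero n := ⟨by omega⟩
  have hn0 : (0 : ℝ) < n := by exact_mod_cast hn
  have hη : (0 : ℝ) < (n : ℝ)⁻¹ := inv_pos.2 hn0
  have hR : (n : ℝ)⁻¹ ≤ b - a := by
    have : (n : ℝ)⁻¹ ≤ 1 := inv_le_one_of_one_le₀ (by exact_mod_cast hn)
    linarith [hd.ha, hd.hb]
  have := hd.prob
  have := prob_emp Λ
  refine (betaWeight_le hβ hη).trans (Real.exp_le_exp.2 ?_)
  have e1 := logPair_emp_emp h hη hR
  have e2 := logPair_emp_left h hd.supp hη hR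
  have e3 := hd.logPair_rhoM_le hη hR
  set L := ∫ p, Real.log |p.1 - p.2| ∂((rhoM ρ).prod (rhoM ρ))
  have e4 : ∑ i, (-(c + V (Λ i)) / 2 - 2 * K * (n : ℝ)⁻¹) ≤
      ∑ i, ∫ y, logKer (n : ℝ)⁻¹ (Λ i - y) ∂(rhoM ρ) := by
    refine Finset.sum_le_sum fun i _ => ?_
    have h1 := hd.le_integral_logKer hη hR (h i)
    have h2 := hd.integral_log_le (h i)
    linarith
  have e5 : ∑ i, (-(c + V (Λ i)) / 2 - 2 * K * (n : ℝ)⁻¹) =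
      -(n * c) / 2 - (∑ i, V (Λ i)) / 2 - 2 * K := by
    have : ∀ i, (-(c + V (Λ i)) / 2 - 2 * K * (n : ℝ)⁻¹) =
      (-c / 2 - 2 * K * (n : ℝ)⁻¹) - V (Λ i) * (1 / 2) := fun i => by ring
    simp_rw [this]
    rw [Finset.sum_sub_distrib, ← Finset.sum_mul]
    simp only [Finset.sum_const, Finset.card_univ, Fintype.card_fin, nsmul_eq_mul]
    field_simp
    ring
  rw [e5] at e4
  have e6 : ∑ i, ∑ j, logKer (n : ℝ)⁻¹ (Λ i - Λ j) =
      (n : ℝ) ^ 2 * logPair (n : ℝ)⁻¹ (emp Λ) (emp Λ) := by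
    rw [e1]; field_simp
  have e7 : ∑ i, ∫ y, logKer (n : ℝ)⁻¹ (Λ i - y) ∂(rhoM ρ) =
      n * logPair (n : ℝ)⁻¹ (emp Λ) (rhoM ρ) := by
    rw [e2]; field_simp
  rw [e7] at e4
  rw [e6, Real.log_inv, logEnergy]
  have e8 := mul_le_mul_of_nonneg_left e3 (sq_nonneg (n : ℝ))
  have e9 := mul_le_mul_of_nonneg_left e4 hn0.le
  have hb2 : 0 < β / 2 := by linarith
  rw [neg_mul, neg_mul, neg_le_neg_iff]
  refine mul_le_mul_of_nonneg_left ?_ hb2.le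
  nlinarith

/-- Two distinct coordinates of a product measure are independent. -/
lemma map_pair_pi (μ : Measure ℝ) [IsProbabilityMeasure μ] {n : ℕ} {i j : Fin n} (hij : i ≠ j) :
    MeasurePreserving (fun Λ : Fin n → ℝ => (Λ i, Λ j)) (Measure.pi fun _ => μ) (μ.prod μ) := by
  refine ⟨by fun_prop, ?_⟩
  have hI := (ProbabilityTheory.iIndepFun_pi (μ := fun _ : Fin n => μ) (X := fun _ x => x)
    (fun _ => aemeasurable_id)).indepFun hij
  rw [ProbabilityTheory.indepFun_iff_map_prod_eq_prod_map_map
    (measurable_pi_apply i).aemeasurable (measurable_pi_apply j).aemeasurable] at hI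
  rw [hI, (measurePreserving_eval (fun _ : Fin n => μ) i).map_eq,
    (measurePreserving_eval (fun _ : Fin n => μ) j).map_eq]

/-- Jensen's inequality for `exp`, in the form needed here. -/
lemma exp_integral_le {α : Type*} [MeasurableSpace α] {μ : Measure α} [IsProbabilityMeasure μ]
    {g w : α → ℝ} (hg : Integrable g μ) (hw : Integrable w μ)
    (h : ∀ᵐ x ∂μ, w x = Real.exp (g x)) : Real.exp (∫ x, g x ∂μ) ≤ ∫ x, w x ∂μ := by
  set m := ∫ x, g x ∂μ with hm
  have h1 : ∫ x, Real.exp m * (g x - m + 1) ∂μ ≤ ∫ x, w x ∂μ := by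
    refine integral_mono_ae (((hg.sub (integrable_const _)).add (integrable_const _)).const_mul _)
      hw ?_
    filter_upwards [h] with x hx
    rw [hx, show g x = m + (g x - m) by ring, Real.exp_add]
    refine mul_le_mul_of_nonneg_left ?_ (Real.exp_pos _).le
    have := Real.add_one_le_exp (g x - m)
    linarith
  have h2 : Integrable (fun x => g x - m) μ := hg.sub (integrable_const _)
  rw [integral_const_mul, integral_add h2 (integrable_const _),
    integral_sub hg (integrable_const _)] at h1
  simpa [← hm] using h1

/-- Lower bound for the partition function, by Jensen's inequality applied to the product of the
equilibrium measures. -/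
lemma le_resZ (hd : EquilData a b K c V ρ) {β : ℝ} (hβ : 0 < β) (n : ℕ) :
    Real.exp (-(β / 2) * ((n : ℝ) ^ 2 * ((∫ p, Real.log |p.1 - p.2| ∂((rhoM ρ).prod (rhoM ρ))) - c)
      + n * ∫ p, Real.log |p.1 - p.2| ∂((rhoM ρ).prod (rhoM ρ)))) ≤ K ^ n * resZ β V a b n := by
  have := hd.prob
  have hK := hd.K_pos
  set L := ∫ p, Real.log |p.1 - p.2| ∂((rhoM ρ).prod (rhoM ρ)) with hL
  set Q := Measure.pi fun _ : Fin n => rhoM ρ with hQ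
  have hQle : Q ≤ K.toNNReal ^ n • volume.restrict (univ.pi fun _ : Fin n => Icc a b) := by
    rw [← pi_smul_restrict]; exact pi_mono_measure hd.rhoM_le
  have hwi : Integrable (betaWeight β V n)
      (K.toNNReal ^ n • volume.restrict (univ.pi fun _ : Fin n => Icc a b)) := by
    have := integrableOn_betaWeight_mul hβ hd.V_cont n a b (continuous_const (y := (1 : ℝ)))
    simp only [one_mul] at this
    exact this.smul_measure_nnreal
  have hVi : ∀ i : Fin n, Integrable (fun Λ : Fin n → ℝ => V (Λ i)) Q := fun i =>
    (measurePreserving_eval (fun _ : Fin n => rhoM ρ) i).integrable_comp_of_integrable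
      (hd.integrable_cont hd.V_cont)
  have hVe : ∀ i : Fin n, ∫ Λ, V (Λ i) ∂Q = ∫ x, V x ∂(rhoM ρ) := by
    intro i
    have hp := measurePreserving_eval (fun _ : Fin n => rhoM ρ) i
    rw [← hp.map_eq, integral_map hp.measurable.aemeasurable hd.V_cont.aestronglyMeasurable]
  have hLi : ∀ i : Fin n, ∀ j ∈ Finset.Ioi i,
      Integrable (fun Λ : Fin n → ℝ => Real.log |Λ i - Λ j|) Q := fun i j hj =>
    (map_pair_pi (rhoM ρ) (Finset.mem_Ioi.1 hj).ne).integrable_comp_of_integrable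
      hd.integrable_log_prod
  have hLe : ∀ i : Fin n, ∀ j ∈ Finset.Ioi i, ∫ Λ, Real.log |Λ i - Λ j| ∂Q = L := by
    intro i j hj
    have hp := map_pair_pi (rhoM ρ) (Finset.mem_Ioi.1 hj).ne
    rw [hL, ← hp.map_eq, integral_map hp.measurable.aemeasurable]
    rw [hp.map_eq]; exact hd.integrable_log_prod.aestronglyMeasurable
  have hne : ∀ᵐ Λ ∂Q, ∀ i, ∀ j ∈ Finset.Ioi i, Λ i - Λ j ≠ 0 := by
    refine ae_all_iff.2 fun i => ?_
    refine (Filter.eventually_all_finset _).2 fun j hj => ?_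
    exact (map_pair_pi (rhoM ρ) (Finset.mem_Ioi.1 hj).ne).quasiMeasurePreserving.ae hd.ae_prod_ne
  have hsi1 : Integrable (fun Λ : Fin n → ℝ => -(n * β / 2) * ∑ i, V (Λ i)) Q :=
    (integrable_finsetSum _ fun i _ => hVi i).const_mul _
  have hsi2 : Integrable (fun Λ : Fin n → ℝ => β * ∑ i, ∑ j ∈ Finset.Ioi i, Real.log |Λ i - Λ j|) Q :=
    (integrable_finsetSum _ fun i _ => integrable_finsetSum _ fun j hj => hLi i j hj).const_mul _
  have hmean : ∫ Λ, logWeight β V n Λ ∂Q =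
      -(β / 2) * ((n : ℝ) ^ 2 * (L - c) + n * L) := by
    unfold logWeight
    rw [integral_add hsi1 hsi2, integral_const_mul, integral_const_mul,
      integral_finsetSum _ fun i _ => hVi i,
      integral_finsetSum _ fun i _ => integrable_finsetSum _ fun j hj => hLi i j hj]
    have e1 : ∑ i, ∫ Λ, ∑ j ∈ Finset.Ioi i, Real.log |Λ i - Λ j| ∂Q =
        ∑ i : Fin n, ∑ j ∈ Finset.Ioi i, L := by
      refine Finset.sum_congr rfl fun i _ => ?_
      rw [integral_finsetSum _ fun j hj => hLi i j hj]
      exact Finset.sum_congr rfl fun j hj => hLe i j hj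
    have e2 := two_mul_sum_Ioi (n := n) (fun _ _ => L) fun _ _ => rfl
    have e3 := hd.two_mul_integral_log_prod
    rw [← hL] at e3
    simp only [hVe, Finset.sum_const, Finset.card_univ, Fintype.card_fin, nsmul_eq_mul] at e1 e2 ⊢
    rw [e1]
    have e4 : ∫ x, V x ∂(rhoM ρ) = 2 * L - c := by linarith
    rw [e4]
    linear_combination (β / 2) * e2
  rw [← hmean]
  refine (exp_integral_le (hsi1.add hsi2) (hwi.mono_measure hQle) ?_).trans ?_
  · filter_upwards [hne] with Λ hΛ using betaWeight_eq_exp hΛ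
  · refine (integral_mono_measure hQle (Filter.Eventually.of_forall
      fun Λ => betaWeight_nonneg _ _ _ _) hwi).trans (le_of_eq ?_)
    rw [integral_smul_nnreal_measure, resZ, NNReal.smul_def, smul_eq_mul, NNReal.coe_pow,
      Real.coe_toNNReal _ hK.le]

end EquilData

/-! ### The mean of a linear statistic -/

namespace EquilData
variable {a b K c : ℝ} {V ρ : ℝ → ℝ}

lemma resZ_pos (hd : EquilData a b K c V ρ) {β : ℝ} (hβ : 0 < β) (n : ℕ) : 0 < resZ β V a b n :=
  pos_of_mul_pos_right ((Real.exp_pos _).trans_le (hd.le_resZ hβ n)) (pow_nonneg hd.K_pos.le n)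

/-- Large-deviation type bound: the squared linear statistic is penalized exponentially at
speed `n ^ 2`, up to a factor `exp (O(n log n))`. -/
lemma betaWeight_mul_exp_le (hd : EquilData a b K c V ρ) {β : ℝ} (hβ : 0 < β) {n : ℕ} (hn : 2 ≤ n)
    {f h : ℝ → ℝ} (hf : ∀ x, HasDerivAt f (h x) x) (hh : Continuous h) {S : ℝ} (hS0 : 0 < S)
    (hS : √(∫ l in Icc a b, f l ^ 2) * √(∫ l in Icc a b, h l ^ 2) = S)
    {Λ : Fin n → ℝ} (hΛ : ∀ i, Λ i ∈ Icc a b) :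
    betaWeight β V n Λ * Real.exp (β / 3456 * (n : ℝ) ^ 2 *
        ((n : ℝ)⁻¹ * ∑ i, f (Λ i) - ∫ x, f x ∂(rhoM ρ)) ^ 2 / S) ≤
      resZ β V a b n * Real.exp (n * Real.log K + β / 2 * n * (5 * K + 1 + Real.log n +
        ∫ p, Real.log |p.1 - p.2| ∂((rhoM ρ).prod (rhoM ρ)))) := by
  have : NeZero n := ⟨by omega⟩
  have hK := hd.K_pos
  have := hd.prob
  have := prob_emp Λ
  have hn2 : (2 : ℝ) ≤ n := by exact_mod_cast hn
  have hn0 : (0 : ℝ) < n := by linarith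
  have hη : (0 : ℝ) < (n : ℝ)⁻¹ := inv_pos.2 hn0
  have hη1 : (n : ℝ)⁻¹ ≤ 1 := inv_le_one_of_one_le₀ (by linarith)
  have hR3 : 3 * (n : ℝ)⁻¹ ≤ b - a := by linarith [hd.ha, hd.hb]
  have hR : (n : ℝ)⁻¹ ≤ b - a := by linarith
  have hw := hd.betaWeight_le_exp_logEnergy hβ (by omega) hΛ
  have hZ := hd.le_resZ hβ n
  have hD := logEnergy_nonneg (emp_supp hΛ) hd.supp hη hR
  set L := ∫ p, Real.log |p.1 - p.2| ∂((rhoM ρ).prod (rhoM ρ))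
  set E := logEnergy (n : ℝ)⁻¹ (emp Λ) (rhoM ρ)
  have hdual := duality (Q := 72 * E + 6 * (2 * K) * (n : ℝ)⁻¹) (by linarith [hd.ha, hd.hb])
    (emp_supp hΛ) hd.supp (by positivity)
    (fun s hs hs3 => om_le_linear (emp_supp hΛ) hd.supp hη hR3 hs hs3
      (hd.tentPair_rhoM_le hη) (by positivity)) hf hh
  rw [integral_emp, mul_assoc 24, hS] at hdual
  set Y := (n : ℝ)⁻¹ * ∑ i, f (Λ i) - ∫ x, f x ∂(rhoM ρ)
  have hg : β / 3456 * (n : ℝ) ^ 2 * Y ^ 2 / S ≤ β / 2 * ((n : ℝ) ^ 2 * E + K * n) := by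
    rw [div_le_iff₀ hS0]
    calc _ ≤ β / 3456 * (n : ℝ) ^ 2 * (24 * S * (72 * E + 6 * (2 * K) * (n : ℝ)⁻¹)) :=
          mul_le_mul_of_nonneg_left hdual (by positivity)
      _ = β / 2 * ((n : ℝ) ^ 2 * E + K * n / 6) * S := by field_simp; ring
      _ ≤ _ := by
          refine mul_le_mul_of_nonneg_right (mul_le_mul_of_nonneg_left ?_ (by positivity)) hS0.le
          have : 0 < K * n := by positivity
          linarith
  calc _ ≤ Real.exp (-(β / 2) * ((n : ℝ) ^ 2 * (E - c + L) - 4 * K * n - n * (1 + Real.log n))) *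
        Real.exp (β / 2 * ((n : ℝ) ^ 2 * E + K * n)) :=
        mul_le_mul hw (Real.exp_le_exp.2 hg) (Real.exp_pos _).le (Real.exp_pos _).le
    _ = Real.exp (-(β / 2) * ((n : ℝ) ^ 2 * (L - c) + n * L)) *
        Real.exp (β / 2 * n * (5 * K + 1 + Real.log n + L)) := by
        rw [← Real.exp_add, ← Real.exp_add]; congr 1; ring
    _ ≤ (K ^ n * resZ β V a b n) * Real.exp (β / 2 * n * (5 * K + 1 + Real.log n + L)) :=
        mul_le_mul_of_nonneg_right hZ (Real.exp_pos _).le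
    _ = _ := by
        rw [Real.exp_add, Real.exp_nat_mul, Real.exp_log hK]; ring

set_option maxHeartbeats 800000 in
/-- The mean of the linear statistic, recentred at its equilibrium value: `betaWeight_mul_exp_le` and
`x ≤ T + exp (x - T)` bound the second moment, hence the mean. -/
lemma sq_mean_le (hd : EquilData a b K c V ρ) {β : ℝ} (hβ : 0 < β) :
    ∃ C > 0, ∀ n : ℕ, 2 ≤ n → ∀ f h : ℝ → ℝ, (∀ x, HasDerivAt f (h x) x) → Continuous h →
      ((resZ β V a b n)⁻¹ * ∫ Λ in univ.pi (fun _ : Fin n => Icc a b),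
        ((n : ℝ)⁻¹ * ∑ i, f (Λ i) - ∫ x, f x ∂(rhoM ρ)) * betaWeight β V n Λ) ^ 2 ≤
      C * (√(∫ l in Icc a b, f l ^ 2) * √(∫ l in Icc a b, h l ^ 2)) * (Real.log n / n) := by
  have hK := hd.K_pos
  have := hd.prob
  have hab : 0 < b - a := by linarith [hd.ha, hd.hb]
  set L := ∫ p, Real.log |p.1 - p.2| ∂((rhoM ρ).prod (rhoM ρ)) with hL
  set M : ℝ := (|Real.log K| + |Real.log (b - a)| + β / 2 * (5 * K + 1 + |L|) + 1) / Real.log 2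
    + β / 2 with hM
  have hlog2 : 0 < Real.log 2 := Real.log_pos (by norm_num)
  have hM0 : 0 < M := by positivity
  refine ⟨3456 * M / β, by positivity, fun n hn f h hf hh => ?_⟩
  have hn2 : (2 : ℝ) ≤ n := by exact_mod_cast hn
  have hn0 : (0 : ℝ) < n := by linarith
  have hln : Real.log 2 ≤ Real.log n := Real.log_le_log (by norm_num) hn2
  have hZ := hd.resZ_pos hβ n
  have hfc : Continuous f := continuous_iff_continuousAt.2 fun x => (hf x).continuousAt
  set Z := resZ β V a b n with hZd
  set box : Set (Fin n → ℝ) := univ.pi fun _ : Fin n => Icc a b with hbox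
  have hboxm : MeasurableSet box := MeasurableSet.univ_pi fun _ => measurableSet_Icc
  set w := betaWeight β V n with hw
  set Y : (Fin n → ℝ) → ℝ := fun Λ => (n : ℝ)⁻¹ * ∑ i, f (Λ i) - ∫ x, f x ∂(rhoM ρ) with hY
  have hYc : Continuous Y := by rw [hY]; fun_prop
  have hwi : IntegrableOn w box := by
    have := integrableOn_betaWeight_mul hβ hd.V_cont n a b (continuous_const (y := (1 : ℝ)))
    simpa only [one_mul] using this
  have hYw : IntegrableOn (fun Λ => Y Λ * w Λ) box :=
    integrableOn_betaWeight_mul hβ hd.V_cont n a b hYc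
  have hY2w : IntegrableOn (fun Λ => Y Λ ^ 2 * w Λ) box :=
    integrableOn_betaWeight_mul hβ hd.V_cont n a b (hYc.pow 2)
  have hwZ : ∫ Λ in box, w Λ = Z := rfl
  have hw0 : ∀ Λ, 0 ≤ w Λ := betaWeight_nonneg β V n
  set m := Z⁻¹ * ∫ Λ in box, Y Λ * w Λ with hm
  have hmZ : ∫ Λ in box, Y Λ * w Λ = m * Z := by rw [hm]; field_simp
  -- the variance is nonnegative
  have hvar : m ^ 2 * Z ≤ ∫ Λ in box, Y Λ ^ 2 * w Λ := by
    have h0 : 0 ≤ ∫ Λ in box, (Y Λ ^ 2 * w Λ - 2 * m * (Y Λ * w Λ) + m ^ 2 * w Λ) :=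
      integral_nonneg fun Λ => by
        have : 0 ≤ (Y Λ - m) ^ 2 * w Λ := mul_nonneg (sq_nonneg _) (hw0 Λ)
        show 0 ≤ _
        nlinarith
    have hi : IntegrableOn (fun Λ => Y Λ ^ 2 * w Λ - 2 * m * (Y Λ * w Λ)) box :=
      hY2w.sub (hYw.const_mul _)
    rw [integral_add hi (hwi.const_mul _), integral_sub hY2w (hYw.const_mul _),
      integral_const_mul, integral_const_mul, hwZ, hmZ] at h0
    nlinarith
  set S := √(∫ l in Icc a b, f l ^ 2) * √(∫ l in Icc a b, h l ^ 2) with hS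
  have hS0 : 0 ≤ S := by positivity
  rcases hS0.eq_or_lt with hS0 | hS0
  · -- the linear statistic is deterministic
    have hY0 : ∀ Λ ∈ box, Y Λ = 0 := by
      intro Λ hΛ
      have hΛ' : ∀ i, Λ i ∈ Icc a b := fun i => hΛ i (mem_univ i)
      have : NeZero n := ⟨by omega⟩
      have := prob_emp Λ
      have hη : (0 : ℝ) < (n : ℝ)⁻¹ := inv_pos.2 hn0
      have hη1 : (n : ℝ)⁻¹ ≤ 1 := inv_le_one_of_one_le₀ (by linarith)
      have hR3 : 3 * (n : ℝ)⁻¹ ≤ b - a := by linarith [hd.ha, hd.hb]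
      have hD := logEnergy_nonneg (emp_supp hΛ') hd.supp hη (by linarith)
      have hdual := duality (by linarith [hd.ha, hd.hb])
        (emp_supp hΛ') hd.supp (by positivity)
        (fun s hs hs3 => om_le_linear (emp_supp hΛ') hd.supp hη hR3 hs hs3
          (hd.tentPair_rhoM_le hη) (by positivity)) hf hh
      rw [integral_emp, mul_assoc 24, ← hS, ← hS0, mul_zero, zero_mul] at hdual
      exact pow_eq_zero_iff two_ne_zero |>.1 (le_antisymm hdual (sq_nonneg _))
    have : ∫ Λ in box, Y Λ * w Λ = 0 := by
      rw [setIntegral_congr_fun hboxm (g := fun _ => (0 : ℝ)) fun Λ hΛ => by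
        simp [hY0 Λ hΛ]]
      simp
    rw [hm, this, ← hS0]; simp
  · set T : ℝ := n * Real.log K + β / 2 * n * (5 * K + 1 + Real.log n + L) with hT
    set q : ℝ := β / 3456 * (n : ℝ) ^ 2 / S with hq
    have hq0 : 0 < q := by positivity
    -- chosen so that `exp (T - T')` times the volume of the box is `1`
    set T' : ℝ := T + n * Real.log (b - a) with hT'
    have hpt : ∀ Λ ∈ box, q * (Y Λ ^ 2 * w Λ) ≤ T' * w Λ + Z * Real.exp (T - T') := by
      intro Λ hΛ
      have h1 := hd.betaWeight_mul_exp_le hβ hn hf hh hS0 rfl (fun i => hΛ i (mem_univ i))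
      rw [← hw, ← hL, ← hT, ← hZd] at h1
      have e1 : β / 3456 * (n : ℝ) ^ 2 * ((n : ℝ)⁻¹ * ∑ i, f (Λ i) - ∫ x, f x ∂(rhoM ρ)) ^ 2 / S
          = q * Y Λ ^ 2 := by rw [hq]; ring
      rw [e1] at h1
      have h2 : q * Y Λ ^ 2 - T' ≤ Real.exp (q * Y Λ ^ 2) * Real.exp (-T') := by
        rw [← Real.exp_add]
        have := Real.add_one_le_exp (q * Y Λ ^ 2 + -T')
        linarith
      have h3 := mul_le_mul_of_nonneg_left h2 (hw0 Λ)
      have h4 := mul_le_mul_of_nonneg_right h1 (Real.exp_pos (-T')).le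
      rw [sub_eq_add_neg T T', Real.exp_add]
      nlinarith
    have hvol : (volume.real box) = (b - a) ^ n := by
      rw [measureReal_def, hbox, volume_pi_pi]
      simp [hab.le]
    have hvolfin : volume box ≠ ⊤ := by
      rw [hbox, volume_pi_pi]
      exact ENNReal.prod_ne_top fun i _ => by simp
    have h5 : q * ∫ Λ in box, Y Λ ^ 2 * w Λ ≤ T' * Z + Z := by
      rw [← integral_const_mul]
      have hc : IntegrableOn (fun _ : Fin n → ℝ => Z * Real.exp (T - T')) box :=
        integrableOn_const hvolfin
      refine (setIntegral_mono_on (hY2w.const_mul _) ((hwi.const_mul T').add hc) hboxm hpt).trans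
        (le_of_eq ?_)
      have := integral_add (hwi.const_mul T') hc
      simp only [Pi.add_apply]
      rw [this, integral_const_mul, hwZ, setIntegral_const, hvol, smul_eq_mul,
        show T - T' = -(n * Real.log (b - a)) by rw [hT']; ring, Real.exp_neg, Real.exp_nat_mul,
        Real.exp_log hab]
      have : (b - a) ^ n ≠ 0 := by positivity
      field_simp
    have h6 : T' + 1 ≤ M * (n * Real.log n) := by
      have e : M * (n * Real.log n) = n * ((|Real.log K| + |Real.log (b - a)| +
          β / 2 * (5 * K + 1 + |L|) + 1) * (Real.log n / Real.log 2)) +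
          β / 2 * n * Real.log n := by rw [hM]; field_simp
      have h1 : (1 : ℝ) ≤ Real.log n / Real.log 2 := (one_le_div hlog2).2 hln
      have h2 : |Real.log K| + |Real.log (b - a)| + β / 2 * (5 * K + 1 + |L|) + 1 ≤
          (|Real.log K| + |Real.log (b - a)| + β / 2 * (5 * K + 1 + |L|) + 1) *
            (Real.log n / Real.log 2) := le_mul_of_one_le_right (by positivity) h1
      have h3 := mul_le_mul_of_nonneg_left h2 hn0.le
      have h4 : T' + 1 ≤ n * (|Real.log K| + |Real.log (b - a)| + β / 2 * (5 * K + 1 + |L|) + 1) +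
          β / 2 * n * Real.log n := by
        have i1 := mul_le_mul_of_nonneg_left (le_abs_self (Real.log K)) hn0.le
        have i2 := mul_le_mul_of_nonneg_left (le_abs_self (Real.log (b - a))) hn0.le
        have i3 := mul_le_mul_of_nonneg_left (le_abs_self L) (show 0 ≤ β / 2 * n by positivity)
        rw [hT', hT]
        linarith
      rw [e]; linarith
    have h7 : q * m ^ 2 ≤ M * (n * Real.log n) := by
      have : q * m ^ 2 * Z ≤ (T' + 1) * Z := by
        have := mul_le_mul_of_nonneg_left hvar hq0.le
        linarith
      exact (le_of_mul_le_mul_right this hZ).trans h6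
    have h8 : m ^ 2 ≤ M * (n * Real.log n) / q := by
      rw [le_div_iff₀ hq0]; linarith
    refine h8.trans (le_of_eq ?_)
    rw [hq]; field_simp

end EquilData

/-! ### The first marginal -/

lemma betaWeight_comp_perm (β : ℝ) (V : ℝ → ℝ) {n : ℕ} (σ : Equiv.Perm (Fin n)) (Λ : Fin n → ℝ) :
    betaWeight β V n (fun i => Λ (σ i)) = betaWeight β V n Λ := by
  -- the square of the product over pairs `i < j` is the product over ordered pairs `i ≠ j`
  have hsq : ∀ M : Fin n → ℝ, (∏ i, ∏ j ∈ Finset.Ioi i, |M i - M j| ^ β) ^ 2 =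
      ∏ i, ∏ j, if j = i then 1 else |M i - M j| ^ β := by
    intro M
    have h := Finset.prod_prod_Ioi_mul_eq_prod_prod_off_diag fun i j => |M i - M j| ^ β
    have h1 : ∏ i, ∏ j ∈ Finset.Ioi i, (|M j - M i| ^ β * |M i - M j| ^ β) =
        (∏ i, ∏ j ∈ Finset.Ioi i, |M i - M j| ^ β) ^ 2 := by
      simp_rw [Finset.prod_mul_distrib, abs_sub_comm]
      rw [sq]
    rw [← h1, h]
    refine Finset.prod_congr rfl fun i _ => ?_
    rw [← Finset.prod_mul_prod_compl {i} (fun j => if j = i then (1 : ℝ) else |M i - M j| ^ β)]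
    simp only [Finset.prod_singleton, if_true, one_mul]
    refine Finset.prod_congr rfl fun j hj => ?_
    rw [if_neg (by simpa using hj), abs_sub_comm]
  have h0 : ∀ M : Fin n → ℝ, 0 ≤ ∏ i, ∏ j ∈ Finset.Ioi i, |M i - M j| ^ β := fun M =>
    Finset.prod_nonneg fun _ _ => Finset.prod_nonneg fun _ _ => Real.rpow_nonneg (abs_nonneg _) _
  rw [betaWeight, betaWeight]
  congr 1
  · exact Equiv.prod_comp σ fun i => Real.exp (-((n : ℝ) * β * V (Λ i)) / 2)
  · refine (pow_left_inj₀ (h0 _) (h0 Λ) two_ne_zero).1 ?_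
    rw [hsq, hsq,
      ← Equiv.prod_comp σ fun i => ∏ j, if j = i then (1 : ℝ) else |Λ i - Λ j| ^ β]
    refine Finset.prod_congr rfl fun i _ => ?_
    rw [← Equiv.prod_comp σ fun j => if j = σ i then (1 : ℝ) else |Λ (σ i) - Λ j| ^ β]
    simp

/-- By symmetry of the weight all coordinates have the same marginal. -/
lemma setIntegral_swap (β : ℝ) (V : ℝ → ℝ) (a b : ℝ) {n : ℕ} [NeZero n] (F : ℝ → ℝ) (i : Fin n) :
    ∫ Λ in univ.pi (fun _ : Fin n => Icc a b), F (Λ i) * betaWeight β V n Λ =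
      ∫ Λ in univ.pi (fun _ : Fin n => Icc a b), F (Λ 0) * betaWeight β V n Λ := by
  set σ : Equiv.Perm (Fin n) := Equiv.swap 0 i
  set e := MeasurableEquiv.piCongrLeft (fun _ : Fin n => ℝ) σ
  have he : ∀ Λ j, e Λ j = Λ (σ j) := by
    intro Λ j
    have : e Λ (σ (σ j)) = Λ (σ j) := Equiv.piCongrLeft_apply_apply (fun _ : Fin n => ℝ) σ Λ (σ j)
    simpa [σ] using this
  have hp : MeasurePreserving e := volume_measurePreserving_piCongrLeft (fun _ : Fin n => ℝ) σ
  rw [← hp.setIntegral_preimage_emb e.measurableEmbedding]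
  have hs : e ⁻¹' (univ.pi fun _ : Fin n => Icc a b) = univ.pi fun _ : Fin n => Icc a b := by
    ext Λ
    simp only [mem_preimage, mem_univ_pi, he]
    exact σ.forall_congr_right (q := fun j => Λ j ∈ Icc a b)
  rw [hs]
  congr 1; ext Λ
  rw [he, show e Λ = fun j => Λ (σ j) from funext (he Λ), betaWeight_comp_perm]
  simp [σ]

/-- Integrating against the first marginal density is averaging over the ensemble. -/
lemma integral_mul_resP1 {β : ℝ} (hβ : 0 < β) {V : ℝ → ℝ} (hV : Continuous V) (a b : ℝ) (k : ℕ)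
    {F : ℝ → ℝ} (hF : Continuous F) :
    IntegrableOn (fun l => F l * resP1 β V a b k l) (Icc a b) ∧
    ∫ l in Icc a b, F l * resP1 β V a b k l = (resZ β V a b (k + 2))⁻¹ *
      ∫ Λ in univ.pi (fun _ : Fin (k + 2) => Icc a b), F (Λ 0) * betaWeight β V (k + 2) Λ := by
  set e := (MeasurableEquiv.piFinSuccAbove (fun _ : Fin (k + 2) => ℝ) 0).symm
  have hp : MeasurePreserving e :=
    (volume_preserving_piFinSuccAbove (fun _ : Fin (k + 2) => ℝ) 0).symm
  have he : ∀ p : ℝ × (Fin (k + 1) → ℝ), e p = Fin.cons p.1 p.2 := fun p => by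
    simp [e, MeasurableEquiv.piFinSuccAbove, Fin.insertNthEquiv]
  have hs : e ⁻¹' (univ.pi fun _ : Fin (k + 2) => Icc a b) =
      Icc a b ×ˢ univ.pi fun _ : Fin (k + 1) => Icc a b := by
    ext p
    simp only [mem_preimage, mem_univ_pi, he, mem_prod, Fin.forall_fin_succ (n := k + 1),
      Fin.cons_zero, Fin.cons_succ]
  have hi := integrableOn_betaWeight_mul hβ hV (k + 2) a b (g := fun Λ => F (Λ 0)) (by fun_prop)
  have hi2 := (hp.integrableOn_comp_preimage e.measurableEmbedding).2 hi
  have hmean := hp.setIntegral_preimage_emb e.measurableEmbedding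
    (fun Λ => F (Λ 0) * betaWeight β V (k + 2) Λ) (univ.pi fun _ : Fin (k + 2) => Icc a b)
  have hfun : (fun Λ => F (Λ 0) * betaWeight β V (k + 2) Λ) ∘ e =
      fun p => F p.1 * betaWeight β V (k + 2) (Fin.cons p.1 p.2) := by
    ext p; simp [he]
  rw [hs, hfun] at hi2
  rw [hs] at hmean
  simp only [he, Fin.cons_zero] at hmean
  rw [Measure.volume_eq_prod] at hi2 hmean
  rw [← hmean, setIntegral_prod _ hi2]
  have hin : ∀ l, F l * resP1 β V a b k l = (resZ β V a b (k + 2))⁻¹ *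
      ∫ y in univ.pi (fun _ : Fin (k + 1) => Icc a b),
        F l * betaWeight β V (k + 2) (Fin.cons l y) := by
    intro l
    rw [integral_const_mul, resP1]; ring
  simp_rw [hin]
  refine ⟨?_, integral_const_mul _ _⟩
  rw [IntegrableOn, ← Measure.prod_restrict] at hi2
  exact hi2.integral_prod_left.const_mul _

namespace EquilData
variable {a b K c : ℝ} {V ρ : ℝ → ℝ}

lemma linear_statistic_le (hd : EquilData a b K c V ρ) {β : ℝ} (hβ : 0 < β) :
    ∃ C > 0, ∀ k : ℕ, ∀ f h : ℝ → ℝ, (∀ x, HasDerivAt f (h x) x) → Continuous h →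
      |∫ l in Icc a b, f l * (resP1 β V a b k l - ρ l)| ≤
        C * √(√(∫ l in Icc a b, f l ^ 2)) * √(√(∫ l in Icc a b, h l ^ 2)) *
          (√(Real.log (k + 2 : ℝ)) / √(k + 2 : ℝ)) := by
  obtain ⟨C, hC, hmain⟩ := hd.sq_mean_le hβ
  have := hd.prob
  refine ⟨√C, Real.sqrt_pos.2 hC, fun k f h hf hh => ?_⟩
  have hfc : Continuous f := continuous_iff_continuousAt.2 fun x => (hf x).continuousAt
  have hm := hmain (k + 2) (by omega) f h hf hh
  have hZ := hd.resZ_pos hβ (k + 2)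
  obtain ⟨hi1, he1⟩ := integral_mul_resP1 hβ hd.V_cont a b k hfc
  have hi2 : IntegrableOn (fun l => f l * ρ l) (Icc a b) :=
    (hd.integrable_rhoM.1 (hd.integrable_cont hfc)).integrableOn
  have he2 : ∫ l in Icc a b, f l * ρ l = ∫ x, f x ∂(rhoM ρ) := by
    rw [hd.integral_rhoM]
    refine setIntegral_eq_integral_of_forall_compl_eq_zero fun x hx => ?_
    rw [hd.ρ_supp x fun h => hx (Icc_subset_Icc hd.ha.le hd.hb.le h), mul_zero]
  set box : Set (Fin (k + 2) → ℝ) := univ.pi fun _ => Icc a b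
  have hii : ∀ i : Fin (k + 2), IntegrableOn (fun Λ => f (Λ i) * betaWeight β V (k + 2) Λ) box :=
    fun i => integrableOn_betaWeight_mul hβ hd.V_cont (k + 2) a b (g := fun Λ => f (Λ i))
      (by fun_prop)
  have hwi : IntegrableOn (betaWeight β V (k + 2)) box := by
    have := integrableOn_betaWeight_mul hβ hd.V_cont (k + 2) a b (continuous_const (y := (1 : ℝ)))
    simpa only [one_mul] using this
  have hwZ : ∫ Λ in box, betaWeight β V (k + 2) Λ = resZ β V a b (k + 2) := rfl
  have key : ∫ l in Icc a b, f l * (resP1 β V a b k l - ρ l) =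
      (resZ β V a b (k + 2))⁻¹ * ∫ Λ in box, (((k + 2 : ℕ) : ℝ)⁻¹ * ∑ i, f (Λ i) -
        ∫ x, f x ∂(rhoM ρ)) * betaWeight β V (k + 2) Λ := by
    have e : ∀ Λ : Fin (k + 2) → ℝ, (((k + 2 : ℕ) : ℝ)⁻¹ * ∑ i, f (Λ i) -
        ∫ x, f x ∂(rhoM ρ)) * betaWeight β V (k + 2) Λ =
        ((k + 2 : ℕ) : ℝ)⁻¹ * ∑ i, f (Λ i) * betaWeight β V (k + 2) Λ -
          (∫ x, f x ∂(rhoM ρ)) * betaWeight β V (k + 2) Λ := fun Λ => by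
      rw [← Finset.sum_mul]; ring
    simp_rw [e, mul_sub]
    rw [integral_sub hi1 hi2, integral_sub ((integrable_finsetSum _ fun i _ => hii i).const_mul _)
      (hwi.const_mul _), integral_const_mul, integral_const_mul,
      integral_finsetSum _ fun i _ => hii i, he1, he2, hwZ]
    simp_rw [box, setIntegral_swap β V a b f, Finset.sum_const, Finset.card_univ,
      Fintype.card_fin, nsmul_eq_mul]
    have : ((k + 2 : ℕ) : ℝ) ≠ 0 := by positivity
    field_simp
  rw [← key] at hm
  push_cast at hm
  refine (Real.abs_le_sqrt hm).trans (le_of_eq ?_)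
  have hl : 0 ≤ Real.log (k + 2 : ℝ) := Real.log_nonneg (by linarith [k.cast_nonneg (α := ℝ)])
  rw [Real.sqrt_mul (by positivity), Real.sqrt_mul hC.le, Real.sqrt_mul (by positivity),
    Real.sqrt_div hl]
  ring

end EquilData

/-! ### Reduction to a globally defined potential and test function -/

lemma betaWeight_congr {β a b : ℝ} {V W : ℝ → ℝ} (hVW : ∀ x ∈ Icc a b, V x = W x) {n : ℕ}
    {Λ : Fin n → ℝ} (hΛ : ∀ i, Λ i ∈ Icc a b) : betaWeight β V n Λ = betaWeight β W n Λ := by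
  rw [betaWeight, betaWeight]
  simp_rw [hVW _ (hΛ _)]

lemma resP1_congr {β a b : ℝ} {V W : ℝ → ℝ} (hVW : ∀ x ∈ Icc a b, V x = W x) (k : ℕ) {l : ℝ}
    (hl : l ∈ Icc a b) : resP1 β V a b k l = resP1 β W a b k l := by
  rw [resP1, resP1, resZ, resZ]
  congr 1
  · congr 1
    exact setIntegral_congr_fun (MeasurableSet.univ_pi fun _ => measurableSet_Icc)
      fun Λ hΛ => betaWeight_congr hVW fun i => hΛ i (mem_univ i)
  · refine setIntegral_congr_fun (MeasurableSet.univ_pi fun _ => measurableSet_Icc)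
      fun y hy => betaWeight_congr hVW fun i => ?_
    refine Fin.cases ?_ (fun j => ?_) i
    · simpa using hl
    · simpa using hy j (mem_univ j)

/-- A function that is `C¹` on `[a, b]` agrees there with a function that is `C¹` on the line. -/
lemma exists_global_primitive {a b : ℝ} (hab : a < b) {f : ℝ → ℝ}
    (hf : ContDiffOn ℝ 1 f (Icc a b)) :
    ∃ F h : ℝ → ℝ, (∀ x, HasDerivAt F (h x) x) ∧ Continuous h ∧ (∀ x ∈ Icc a b, f x = F x) ∧
      ∀ x ∈ Ioo a b, deriv f x = h x := by
  have hc : ContinuousOn (derivWithin f (Icc a b)) (Icc a b) :=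
    hf.continuousOn_derivWithin (uniqueDiffOn_Icc hab) le_rfl
  set h : ℝ → ℝ := IccExtend hab.le ((Icc a b).domRestrict (derivWithin f (Icc a b))) with hh
  have hhc : Continuous h := (continuousOn_iff_continuous_domRestrict.1 hc).Icc_extend'
  have hhe : ∀ x ∈ Icc a b, h x = derivWithin f (Icc a b) x := fun x hx => by
    rw [hh, IccExtend_of_mem _ _ hx]; rfl
  have hder : ∀ x ∈ Ioo a b, deriv f x = h x := fun x hx => by
    rw [hhe x (Ioo_subset_Icc_self hx), derivWithin_of_mem_nhds (Icc_mem_nhds hx.1 hx.2)]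
  refine ⟨fun x => f a + ∫ t in a..x, h t, h, fun x => ?_, hhc, fun x hx => ?_, hder⟩
  · exact (intervalIntegral.integral_hasDerivAt_right (hhc.intervalIntegrable _ _)
      (hhc.stronglyMeasurableAtFilter _ _) hhc.continuousAt).const_add _
  · have : ∫ t in a..x, h t = f x - f a := by
      refine intervalIntegral.integral_eq_sub_of_hasDerivAt_of_le hx.1
        (hf.continuousOn.mono (Icc_subset_Icc_right hx.2)) (fun t ht => ?_)
        (hhc.intervalIntegrable _ _)
      have ht' : t ∈ Ioo a b := ⟨ht.1, ht.2.trans_le hx.2⟩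
      rw [← hder t ht']
      exact (((hf.differentiableOn one_ne_zero) t (Ioo_subset_Icc_self ht')).differentiableAt
        (Icc_mem_nhds ht'.1 ht'.2)).hasDerivAt
    simp only [this]; ring

/-- The potential of an ensemble satisfying C1–C3 can be replaced outside `[-2 - ε, 2 + ε]` so that
it is continuous on the line, which affects neither the ensemble nor the equilibrium problem. -/
lemma exists_equilData {V : ℝ → ℝ} {D : Set ℂ} {ρ : ℝ → ℝ} {P : ℂ → ℂ} (hC : EquilC13 V D ρ P)
    {ε : ℝ} (hε : 0 < ε) (hI : ∀ x : ℝ, x ∈ Icc (-2 - ε) (2 + ε) → (x : ℂ) ∈ D) :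
    ∃ K c : ℝ, ∃ W : ℝ → ℝ, (∀ x ∈ Icc (-2 - ε) (2 + ε), V x = W x) ∧
      EquilData (-2 - ε) (2 + ε) K c W ρ := by
  obtain ⟨Vc, hVc, hVV⟩ := hC.V_anal
  obtain ⟨c, hc1, hc2⟩ := hC.equil
  have hab : -2 - ε ≤ 2 + ε := by linarith
  have hVcont : ContinuousOn V (Icc (-2 - ε) (2 + ε)) := by
    have h1 : ContinuousOn (fun x : ℝ => (Vc x).re) (Icc (-2 - ε) (2 + ε)) :=
      Complex.continuous_re.comp_continuousOn
        (hVc.continuousOn.comp Complex.continuous_ofReal.continuousOn hI)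
    refine h1.congr fun x hx => ?_
    simp [hVV x (hI x hx)]
  set W : ℝ → ℝ := IccExtend hab ((Icc (-2 - ε) (2 + ε)).domRestrict V) with hW
  have hVW : ∀ x ∈ Icc (-2 - ε) (2 + ε), V x = W x := fun x hx => by
    rw [hW, IccExtend_of_mem _ _ hx]; rfl
  have hsub : Icc (-2 : ℝ) 2 ⊆ Icc (-2 - ε) (2 + ε) :=
    Icc_subset_Icc (by linarith) (by linarith)
  have hρc : ContinuousOn ρ (Icc (-2 : ℝ) 2) := by
    have h1 : ContinuousOn (fun x : ℝ => (P x).re) (Icc (-2 : ℝ) 2) :=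
      Complex.continuous_re.comp_continuousOn
        (hC.P_anal.continuousOn.comp Complex.continuous_ofReal.continuousOn hC.D_supset)
    have h2 : ContinuousOn (fun x : ℝ => Real.sqrt (4 - x ^ 2)) (Icc (-2 : ℝ) 2) := by fun_prop
    exact ((continuousOn_const.mul h1).mul h2).congr hC.ρ_eq
  obtain ⟨K, hK⟩ := isCompact_Icc.exists_bound_of_continuousOn hρc
  refine ⟨K, c, W, hVW, ?_⟩
  refine
    { ha := by linarith
      hb := by linarith
      V_cont := (continuousOn_iff_continuous_domRestrict.1 hVcont).Icc_extend'
      ρ_meas := ?_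
      ρ_nonneg := hC.ρ_nonneg
      ρ_le := fun x => ?_
      ρ_supp := hC.ρ_supp
      ρ_int := hC.ρ_int
      equil_le := fun x hx => ?_
      equil_eq := fun x hx => ?_ }
  · refine measurable_of_restrict_of_restrict_compl measurableSet_Icc
      (continuousOn_iff_continuous_domRestrict.1 hρc).measurable ?_
    rw [show (Icc (-2 : ℝ) 2)ᶜ.domRestrict ρ = fun _ => 0 from
      funext fun x => hC.ρ_supp x x.2]
    exact measurable_const
  · by_cases hx : x ∈ Icc (-2 : ℝ) 2
    · exact (le_abs_self _).trans (hK x hx)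
    · rw [hC.ρ_supp x hx]
      exact (norm_nonneg _).trans (hK 0 (by norm_num))
  · rw [← hVW x hx]
    by_cases h : x ∈ Icc (-2 : ℝ) 2
    · exact (hc1 x h).le
    · exact (hc2 x h).le
  · rw [← hVW x (hsub hx)]
    exact hc1 x hx

end BetaEns

/-- a priori bound
`|∫ f (p₁⁽ⁿ⁾-ρ)| ≤ C ‖f‖₂^{1/2} ‖f'‖₂^{1/2} √(log n / n)` on linear statistics. -/
theorem a_priori_linear_statistics_bound
    (β : ℝ) (hβ : 0 < β) (V : ℝ → ℝ)
    (D : Set ℂ) (ρ : ℝ → ℝ) (P : ℂ → ℂ) (hC : EquilC13 V D ρ P)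
    (ε : ℝ) (hε : 0 < ε)
    (hI : ∀ x : ℝ, x ∈ Set.Icc (-2 - ε) (2 + ε) → (x : ℂ) ∈ D) :
    ∃ C > 0, ∀ f : ℝ → ℝ, ContDiffOn ℝ 1 f (Set.Icc (-2 - ε) (2 + ε)) → ∀ k : ℕ,
      |∫ l in Set.Icc (-2 - ε) (2 + ε), f l * (resP1 β V (-2 - ε) (2 + ε) k l - ρ l)|
        ≤ C * Real.sqrt (Real.sqrt (∫ l in Set.Icc (-2 - ε) (2 + ε), f l ^ 2)) *
            Real.sqrt (Real.sqrt (∫ l in Set.Icc (-2 - ε) (2 + ε), deriv f l ^ 2)) *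
            (Real.sqrt (Real.log (k + 2 : ℝ)) / Real.sqrt (k + 2 : ℝ)) := by
  have hab : -2 - ε < 2 + ε := by linarith
  obtain ⟨K, c, W, hVW, hd⟩ := BetaEns.exists_equilData hC hε hI
  obtain ⟨C, hC0, hmain⟩ := hd.linear_statistic_le hβ
  refine ⟨C, hC0, fun f hf k => ?_⟩
  obtain ⟨F, h, hF, hh, hfF, hhf⟩ := BetaEns.exists_global_primitive hab hf
  have h1 : ∫ l in Set.Icc (-2 - ε) (2 + ε), f l ^ 2 =
      ∫ l in Set.Icc (-2 - ε) (2 + ε), F l ^ 2 :=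
    setIntegral_congr_fun measurableSet_Icc fun l hl => by simp only [hfF l hl]
  have h2 : ∫ l in Set.Icc (-2 - ε) (2 + ε), deriv f l ^ 2 =
      ∫ l in Set.Icc (-2 - ε) (2 + ε), h l ^ 2 := by
    rw [integral_Icc_eq_integral_Ioo, integral_Icc_eq_integral_Ioo]
    exact setIntegral_congr_fun measurableSet_Ioo fun l hl => by simp only [hhf l hl]
  have h3 : ∫ l in Set.Icc (-2 - ε) (2 + ε), f l * (resP1 β V (-2 - ε) (2 + ε) k l - ρ l) =
      ∫ l in Set.Icc (-2 - ε) (2 + ε), F l * (resP1 β W (-2 - ε) (2 + ε) k l - ρ l) :=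
    setIntegral_congr_fun measurableSet_Icc fun l hl => by
      simp only [hfF l hl, BetaEns.resP1_congr hVW k hl]
  rw [h1, h2, h3]
  exact hmain k F h hF hh
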